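/- arXiv:1610.03537 — 5 statements merged into one kernel-verified Lean document; each statement's English description precedes it below -/
import Mathlib

section
/- Let (X,T) be a minimal Cantor system, let p : X → ℤ⁺ be a function, and suppose that S(x) = T^{p(x)}(x) defines a homeomorphism S : X → X (i.e. S is a speedup of (X,T)). Then p is bounded if and only if p is continuous. -/
/-- A minimal Cantor-type dynamical system: every `T`-orbit (over `ℤ`) is dense. -/
def IsMinimalHomeo {X : Type*} [TopologicalSpace X] (T : Equiv.Perm X) : Prop :=
  ∀ x : X, Dense (Set.range fun n : ℤ => (T ^ n) x)

/-! Minimality and the absence of isolated points make the `T`-action on each orbit free, so the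
level set `{p = n}` is the coincidence set of the continuous maps `S` and `T ^ n`, hence closed.
If `p` is bounded, these finitely many closed level sets partition `X`, so each is also open.
Conversely, a continuous integer-valued function on a compact space takes finitely many values. -/

open Function Set Topology

theorem finite_range_iff_exists_natAbs_le {α : Type*} {f : α → ℤ} :
    (range f).Finite ↔ ∃ M : ℕ, ∀ a, (f a).natAbs ≤ M := by
  constructor
  · intro hf
    obtain ⟨M, hM⟩ := (hf.image Int.natAbs).bddAbove
    exact ⟨M, fun a => hM (mem_image_of_mem _ (mem_range_self a))⟩
  · rintro ⟨M, hM⟩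
    refine (finite_Icc (-M : ℤ) M).subset (range_subset_iff.2 fun a => abs_le.1 ?_)
    rw [Int.abs_eq_natAbs]
    exact_mod_cast hM a

theorem zpow_smul_injective_of_infinite_range {G α : Type*} [Group G] [MulAction G α] {g : G}
    {a : α} (h : (range fun n : ℤ => g ^ n • a).Infinite) :
    Injective fun n : ℤ => g ^ n • a := by
  have period_eq_zero : MulAction.period g a = 0 := by
    by_contra hperiod
    have hpos : (0 : ℤ) < MulAction.period g a := by omega
    refine h (((finite_Ico 0 (MulAction.period g a : ℤ)).image fun n : ℤ => g ^ n • a).subset ?_)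
    rintro _ ⟨n, rfl⟩
    exact ⟨n % MulAction.period g a, ⟨Int.emod_nonneg n hpos.ne', Int.emod_lt_of_pos n hpos⟩,
      MulAction.zpow_mod_period_smul n⟩
  intro m n hmn
  have hfix : g ^ (-n + m) • a = a := by
    rw [zpow_add, mul_smul, zpow_neg, inv_smul_eq_iff]
    exact hmn
  rw [MulAction.zpow_smul_eq_iff_period_dvd, period_eq_zero, Int.natCast_zero,
    zero_dvd_iff] at hfix
  omega

theorem isEmbedding_natCast_int : IsEmbedding ((↑) : ℕ → ℤ) :=
  LeftInverse.isEmbedding Int.toNat_natCast continuous_of_discreteTopology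
    continuous_of_discreteTopology

section Topology

variable {X Y ι : Type*} [TopologicalSpace X] [TopologicalSpace Y]

theorem infinite_of_dense [T1Space X] (x : X) [(𝓝[≠] x).NeBot] {s : Set X} (hs : Dense s) :
    s.Infinite := fun hfin =>
  infinite_of_mem_nhds x Filter.univ_mem
    (by rwa [← hs.closure_eq, hfin.isClosed.closure_eq])

theorem continuous_of_finite_range_of_isClosed_fiber {f : X → Y} (hfin : (range f).Finite)
    (hclosed : ∀ y, IsClosed (f ⁻¹' {y})) : Continuous f := by
  refine continuous_iff_isClosed.2 fun s _ => ?_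
  rw [← preimage_inter_range, ← biUnion_preimage_singleton]
  exact (hfin.inter_of_right s).isClosed_biUnion fun y _ => hclosed y

theorem isClosed_fiber_of_eq_apply [T2Space Y] {φ : ι → X → Y} {S : X → Y} {p : X → ι}
    (hinj : ∀ x, Injective (φ · x)) (hS : Continuous S) (hSp : ∀ x, S x = φ (p x) x) {i : ι}
    (hφ : Continuous (φ i)) : IsClosed (p ⁻¹' {i}) := by
  have fiber_eq : p ⁻¹' {i} = {x | S x = φ i x} := by
    ext x
    rw [mem_ofPred_eq, hSp]
    exact (hinj x).eq_iff.symm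
  rw [fiber_eq]
  exact isClosed_eq hS hφ

theorem finite_range_iff_continuous_of_eq_apply [CompactSpace X] [T2Space Y]
    [TopologicalSpace ι] [DiscreteTopology ι] {φ : ι → X → Y} {S : X → Y} {p : X → ι}
    (hφ : ∀ i, Continuous (φ i)) (hinj : ∀ x, Injective (φ · x)) (hS : Continuous S)
    (hSp : ∀ x, S x = φ (p x) x) : (range p).Finite ↔ Continuous p where
  mp hfin := continuous_of_finite_range_of_isClosed_fiber hfin fun i =>
    isClosed_fiber_of_eq_apply hinj hS hSp (hφ i)
  mpr hp := (isCompact_range hp).finite_of_discrete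

theorem continuous_perm_zpow {T : Equiv.Perm X} (hT : Continuous T) (hT' : Continuous T.symm) :
    ∀ n : ℤ, Continuous ⇑(T ^ n)
  | .ofNat n => by
    rw [Int.ofNat_eq_natCast, zpow_natCast, Equiv.Perm.coe_pow]
    exact hT.iterate n
  | .negSucc n => by
    rw [zpow_negSucc, ← inv_pow, Equiv.Perm.coe_pow, Equiv.Perm.coe_inv]
    exact hT'.iterate (n + 1)

theorem IsMinimalHomeo.zpow_apply_injective [T1Space X] [PerfectSpace X] {T : Equiv.Perm X}
    (hT : IsMinimalHomeo T) (x : X) : Injective fun n : ℤ => (T ^ n) x :=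
  zpow_smul_injective_of_infinite_range (g := T) (infinite_of_dense x (hT x))

end Topology

theorem speedup_jump_bounded_iff_continuous_general
    {X : Type*} [TopologicalSpace X] [CompactSpace X] [T2Space X] [PerfectSpace X]
    {T : Equiv.Perm X} (hTc : Continuous T) (hTmin : IsMinimalHomeo T)
    {p : X → ℤ} {S : X → X} (hSc : Continuous S) (hSp : ∀ x, S x = (T ^ p x) x) :
    (∃ M : ℕ, ∀ x, (p x).natAbs ≤ M) ↔ Continuous p :=
  finite_range_iff_exists_natAbs_le.symm.trans <|
    finite_range_iff_continuous_of_eq_apply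
      (continuous_perm_zpow hTc hTc.continuous_symm_of_equiv_compact_to_t2)
      hTmin.zpow_apply_injective hSc hSp

/-- Let `(X,T)` be a minimal Cantor system, `p : X → ℤ⁺`, and suppose
`S x = T^(p x) x` defines a homeomorphism of `X`. Then `p` is bounded iff `p` is continuous. -/
theorem speedup_jump_bounded_iff_continuous
    {X : Type*} [TopologicalSpace X] [CompactSpace X]
    [TopologicalSpace.MetrizableSpace X] [TotallyDisconnectedSpace X] [PerfectSpace X]
    [Nonempty X]
    (T : Equiv.Perm X) (hTc : Continuous T) (hTc' : Continuous T.symm)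
    (hTmin : IsMinimalHomeo T)
    (p : X → ℕ) (hp1 : ∀ x, 1 ≤ p x)
    (S : Equiv.Perm X) (hSc : Continuous S) (hSc' : Continuous S.symm)
    (hSp : ∀ x, S x = (T ^ p x) x) :
    (∃ M : ℕ, ∀ x, p x ≤ M) ↔ Continuous p := by
  simpa only [comp_apply, Int.natAbs_natCast, isEmbedding_natCast_int.continuous_iff]
    using speedup_jump_bounded_iff_continuous_general hTc hTmin (p := Nat.cast ∘ p) hSc
      (by simpa only [comp_apply, zpow_natCast] using hSp)
end

section
/- Let (X,T) be a minimal Cantor system and let S be a bounded speedup of T, with S(x) = T^{p(x)}(x) for a bounded p : X → ℤ⁺. Then there is a positive integer c such that for every x ∈ X, the T-orbit {T^n x : n ∈ ℤ} of x is the union of exactly c distinct S-orbits; that is, the set of S-orbits contained in the T-orbit of x has cardinality c, independently of x. -/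
/-- The (two-sided) orbit of a point under a bijection. -/
def zOrbit {X : Type*} (T : Equiv.Perm X) (x : X) : Set X :=
  Set.range fun n : ℤ => (T ^ n) x

/-!
Let `M` bound the jump function `p`. Along an infinite `T`-orbit, `S` acts on `T`-times as a
permutation `σ` of `ℤ` with `n < σ n ≤ n + M`. Every cycle of such a permutation is an increasing
bi-infinite sequence and crosses a given threshold exactly once, so the `S`-orbits in the `T`-orbit
of `x` correspond to the times `i ∈ [0, M)` with `M ≤ i + p (T ^ i x)`. On an infinite space all
`T`-orbits are infinite, so the fibres of `p` are the closed sets `{S = T ^ k}` and `p` is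
continuous; hence the number of these times is a continuous function of `x`. It is constant along
`T`-orbits, hence constant by minimality. If `X` is finite, continuity is automatic because the
topology is discrete.
-/

namespace BoundedSpeedup

open Equiv Function

variable {X Y : Type*} {S T : Perm X} {p : X → ℕ} {M : ℕ} {x y : X}

lemma mem_zOrbit_iff : y ∈ zOrbit T x ↔ T.SameCycle x y := Iff.rfl

lemma zOrbit_eq_zOrbit_iff : zOrbit T x = zOrbit T y ↔ T.SameCycle x y := by
  refine ⟨fun h => ?_, fun h => Set.ext fun z => ⟨h.symm.trans, h.trans⟩⟩
  rw [← mem_zOrbit_iff, h]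
  exact Perm.SameCycle.rfl

lemma semiconj_zpow {f : X → Y} {R : Perm Y} (h : Semiconj f T R) :
    ∀ n : ℤ, Semiconj f ⇑(T ^ n) ⇑(R ^ n)
  | .ofNat n => by simpa only [Int.ofNat_eq_natCast, zpow_natCast, Perm.coe_pow] using
      h.iterate_right n
  | .negSucc n => by
      have hinv : Semiconj f ⇑T⁻¹ ⇑R⁻¹ := h.inverses_right T.apply_symm_apply R.symm_apply_apply
      simpa only [zpow_negSucc, ← inv_pow, Perm.coe_pow] using hinv.iterate_right (n + 1)

lemma apply_eq_of_sameCycle {f : X → Y} (hf : ∀ z, f (T z) = f z) (h : T.SameCycle x y) :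
    f x = f y := by
  obtain ⟨n, rfl⟩ := h
  simpa using (semiconj_zpow (R := 1) hf n x).symm

lemma sameCycle_iff_of_semiconj {f : X → Y} {R : Perm Y} (hf : Injective f) (h : Semiconj f T R) :
    R.SameCycle (f x) (f y) ↔ T.SameCycle x y :=
  exists_congr fun n => by rw [← semiconj_zpow h n, hf.eq_iff]

lemma zOrbit_subset_zOrbit (hS : ∀ z, T.SameCycle z (S z)) (x : X) : zOrbit S x ⊆ zOrbit T x :=
  fun _ hy => zOrbit_eq_zOrbit_iff.1 <|
    apply_eq_of_sameCycle (fun z => (zOrbit_eq_zOrbit_iff.2 (hS z)).symm) hy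

lemma injective_zpow_apply (h : (zOrbit T x).Infinite) : Injective fun n : ℤ => (T ^ n) x := by
  have hperiod : MulAction.period T x = 0 := by
    by_contra hne
    refine h (((Set.finite_Ico 0 (MulAction.period T x : ℤ)).image fun n => (T ^ n) x).subset ?_)
    rintro _ ⟨n, rfl⟩
    exact ⟨n % MulAction.period T x, ⟨Int.emod_nonneg _ (by lia), Int.emod_lt_of_pos _ (by lia)⟩,
      MulAction.zpow_mod_period_smul (g := T) (a := x) n⟩
  intro m n hmn
  have hfix : T ^ (-n + m) • x = x := by
    rw [zpow_add, mul_smul, zpow_neg, inv_smul_eq_iff]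
    exact hmn
  rw [MulAction.zpow_smul_eq_iff_period_dvd, hperiod, Nat.cast_zero, zero_dvd_iff] at hfix
  lia

/-- The set of `S`-orbits contained in the `T`-orbit of `x`. -/
def orbitsWithin (S T : Perm X) (x : X) : Set (Set X) :=
  {O | (∃ y, O = zOrbit S y) ∧ O ⊆ zOrbit T x}

lemma zOrbit_mem_orbitsWithin (hS : ∀ z, T.SameCycle z (S z)) (h : T.SameCycle x y) :
    zOrbit S y ∈ orbitsWithin S T x :=
  ⟨⟨y, rfl⟩, zOrbit_eq_zOrbit_iff.2 h ▸ zOrbit_subset_zOrbit hS y⟩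

lemma orbitsWithin_apply (S T : Perm X) (x : X) :
    orbitsWithin S T (T x) = orbitsWithin S T x := by
  rw [orbitsWithin, zOrbit_eq_zOrbit_iff.2 (Perm.sameCycle_apply_left.2 .rfl), orbitsWithin]

lemma existsUnique_lt_le_succ_of_strictMono {t : ℤ → ℤ} (ht : StrictMono t) (N : ℤ) :
    ∃! k, t k < N ∧ N ≤ t (k + 1) := by
  obtain ⟨a, ha⟩ : ∃ a, t a < N := by
    simpa using not_bddBelow_iff.1 ht.not_bddBelow_range_of_isPredArchimedean N
  obtain ⟨b, hb⟩ : ∃ b, N < t b := by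
    simpa using not_bddAbove_iff.1 ht.not_bddAbove_range_of_isSuccArchimedean N
  obtain ⟨k, hk, hmax⟩ := Int.exists_greatest_of_bdd (P := fun k => t k < N)
    ⟨b, fun k hk => (ht.lt_iff_lt.1 (hk.trans hb)).le⟩ ⟨a, ha⟩
  refine ⟨k, ⟨hk, le_of_not_gt fun h => by have := hmax _ h; lia⟩, fun l ⟨hl, hl'⟩ => ?_⟩
  exact le_antisymm (hmax l hl) (Int.lt_add_one_iff.1 (ht.lt_iff_lt.1 (hk.trans_le hl')))

lemma existsUnique_sameCycle_lt_le_apply {σ : Perm ℤ} (hσ : ∀ n, n < σ n) (m N : ℤ) :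
    ∃! i, σ.SameCycle m i ∧ i < N ∧ N ≤ σ i := by
  have hsucc (k : ℤ) : (σ ^ (k + 1)) m = σ ((σ ^ k) m) := by
    rw [add_comm, zpow_one_add, Perm.mul_apply]
  have hmono : StrictMono fun k : ℤ => (σ ^ k) m :=
    strictMono_int_of_lt_succ fun k => by simpa only [hsucc] using hσ _
  obtain ⟨k, hk, huniq⟩ := existsUnique_lt_le_succ_of_strictMono hmono N
  simp only [hsucc] at hk huniq
  refine ⟨(σ ^ k) m, ⟨⟨k, rfl⟩, hk⟩, ?_⟩
  rintro _ ⟨⟨l, rfl⟩, hl⟩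
  rw [huniq l hl]

lemma sameCycle_apply_of_speedup (hSp : ∀ z, S z = (T ^ p z) z) (z : X) : T.SameCycle z (S z) :=
  ⟨p z, by rw [hSp, zpow_natCast]⟩

lemma exists_semiconj_perm_int (hS : ∀ z, T.SameCycle z (S z))
    (hx : Injective fun n : ℤ => (T ^ n) x) :
    ∃ σ : Perm ℤ, Semiconj (fun n : ℤ => (T ^ n) x) σ S := by
  have hinv (z : X) : S z ∈ zOrbit T x ↔ z ∈ zOrbit T x :=
    ⟨fun h => Perm.SameCycle.trans h (hS z).symm, fun h => Perm.SameCycle.trans h (hS z)⟩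
  let e : ℤ ≃ zOrbit T x := Equiv.ofInjective _ hx
  refine ⟨e.symm.permCongr (S.subtypePerm hinv), fun n => ?_⟩
  exact congrArg Subtype.val (e.apply_symm_apply _)

lemma exists_semiconj_perm_int_of_speedup (hSp : ∀ z, S z = (T ^ p z) z)
    (hx : Injective fun n : ℤ => (T ^ n) x) :
    ∃ σ : Perm ℤ, Semiconj (fun n : ℤ => (T ^ n) x) σ S ∧ ∀ n, σ n = n + p ((T ^ n) x) := by
  obtain ⟨σ, hσ⟩ := exists_semiconj_perm_int (sameCycle_apply_of_speedup hSp) hx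
  refine ⟨σ, hσ, fun n => hx ?_⟩
  calc (T ^ σ n) x = (T ^ p ((T ^ n) x)) ((T ^ n) x) := (hσ n).trans (hSp _)
    _ = (T ^ (n + p ((T ^ n) x))) x := by
      rw [add_comm, zpow_add, zpow_natCast, Perm.mul_apply]

/-- The times `i ∈ [0, M)` along the `T`-orbit of `x` at which the jump `p` reaches or passes
time `M`. Windows starting at `x` are used, rather than ending at `x`, so that only forward
iterates of `T` occur. -/
def crossings (T : Perm X) (p : X → ℕ) (M : ℕ) (x : X) : Finset ℕ :=
  {i ∈ Finset.range M | M ≤ i + p ((T ^ i) x)}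

lemma mem_crossings {i : ℕ} : i ∈ crossings T p M x ↔ i < M ∧ M ≤ i + p ((T ^ i) x) := by
  simp only [crossings, Finset.mem_filter, Finset.mem_range]

lemma bijOn_crossings_orbitsWithin (hSp : ∀ z, S z = (T ^ p z) z) (hp1 : ∀ z, 1 ≤ p z)
    (hM : ∀ z, p z ≤ M) (hx : Injective fun n : ℤ => (T ^ n) x) :
    Set.BijOn (fun i : ℕ => zOrbit S ((T ^ i) x)) (crossings T p M x) (orbitsWithin S T x) := by
  obtain ⟨σ, hσ, hσp⟩ := exists_semiconj_perm_int_of_speedup hSp hx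
  have hcycle (m n : ℤ) : S.SameCycle ((T ^ m) x) ((T ^ n) x) ↔ σ.SameCycle m n :=
    sameCycle_iff_of_semiconj hx hσ
  have hlt (n : ℤ) : n < σ n := by
    have := hp1 ((T ^ n) x)
    have := hσp n
    lia
  have hcross (m : ℤ) : ∃! i, σ.SameCycle m i ∧ i < M ∧ M ≤ σ i :=
    existsUnique_sameCycle_lt_le_apply hlt m M
  have hmem (i : ℕ) : i ∈ crossings T p M x ↔ (i : ℤ) < M ∧ M ≤ σ i := by
    rw [mem_crossings, hσp, zpow_natCast]
    norm_cast
  refine ⟨fun i _ => ?_, fun i hi j hj hij => ?_, ?_⟩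
  · exact zOrbit_mem_orbitsWithin (sameCycle_apply_of_speedup hSp)
      (Perm.sameCycle_pow_right.2 .rfl)
  · have hij' : σ.SameCycle i j := by
      rw [← hcycle, zpow_natCast, zpow_natCast, ← zOrbit_eq_zOrbit_iff]
      exact hij
    exact Int.ofNat_inj.1 <| (hcross i).unique ⟨.rfl, (hmem i).1 hi⟩ ⟨hij', (hmem j).1 hj⟩
  · rintro _ ⟨⟨y, rfl⟩, hy⟩
    obtain ⟨m, rfl⟩ := hy (mem_zOrbit_iff.2 .rfl)
    obtain ⟨i, ⟨hmi, hi⟩, -⟩ := hcross m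
    have hi_nonneg : 0 ≤ i := by
      have := hσp i
      have := hM ((T ^ i) x)
      lia
    lift i to ℕ using hi_nonneg
    refine ⟨i, (hmem i).2 hi, ?_⟩
    rw [← hcycle, zpow_natCast, ← zOrbit_eq_zOrbit_iff] at hmi
    exact hmi.symm

section Topology

variable [TopologicalSpace X]

lemma zOrbit_infinite_of_isMinimalHomeo [T1Space X] [Infinite X] (hT : IsMinimalHomeo T) (x : X) :
    (zOrbit T x).Infinite := fun hfin =>
  Set.infinite_univ <| (hfin.isClosed.closure_eq.symm.trans (hT x).closure_eq) ▸ hfin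

lemma eq_of_isMinimalHomeo_of_invariant [TopologicalSpace Y] [T2Space Y] (hT : IsMinimalHomeo T)
    {f : X → Y} (hf : Continuous f) (hinv : ∀ z, f (T z) = f z) (x y : X) : f x = f y := by
  refine congrFun (continuous_const.ext_on (hT x) hf ?_) y
  exact fun z hz => apply_eq_of_sameCycle hinv hz

lemma continuous_jump_of_speedup [T2Space X] (hT : Continuous T) (hS : Continuous S)
    (hSp : ∀ z, S z = (T ^ p z) z) (hM : ∀ z, p z ≤ M)
    (hfree : ∀ x, Injective fun n : ℤ => (T ^ n) x) : Continuous p := by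
  have hfiber (k : ℕ) : p ⁻¹' {k} = {x | S x = T^[k] x} := by
    ext x
    have h := (hfree x).eq_iff (a := p x) (b := k)
    simp only [zpow_natCast, ← hSp, Nat.cast_inj, Perm.coe_pow] at h
    exact h.symm
  have hclosed (k : ℕ) : IsClosed (p ⁻¹' {k}) := by
    rw [hfiber]
    exact isClosed_eq hS (hT.iterate k)
  refine continuous_iff_isClosed.2 fun s _ => ?_
  have hpre : p ⁻¹' s = ⋃ k ∈ s ∩ Set.Iic M, p ⁻¹' {k} := by
    ext x
    simp [hM]
  rw [hpre]
  exact ((Set.finite_Iic M).inter_of_right s).isClosed_biUnion fun k _ => hclosed k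

lemma continuous_card_crossings (hT : Continuous T) (hp : Continuous p) (M : ℕ) :
    Continuous fun x => (crossings T p M x).card := by
  simp only [crossings, Finset.card_filter]
  refine continuous_finsetSum _ fun i _ => ?_
  have hjump : Continuous fun x => p ((T ^ i) x) := by
    simp only [Perm.coe_pow]
    exact hp.comp (hT.iterate i)
  exact (continuous_of_discreteTopology (f := fun q => if M ≤ i + q then 1 else 0)).comp hjump

lemma finite_and_continuous_ncard_orbitsWithin [T2Space X] (hT : Continuous T)
    (hTmin : IsMinimalHomeo T) (hS : Continuous S) (hSp : ∀ z, S z = (T ^ p z) z)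
    (hp1 : ∀ z, 1 ≤ p z) (hM : ∀ z, p z ≤ M) :
    (∀ x, (orbitsWithin S T x).Finite) ∧ Continuous fun x => (orbitsWithin S T x).ncard := by
  cases finite_or_infinite X with
  | inl _ => exact ⟨fun _ => Set.toFinite _, continuous_of_discreteTopology⟩
  | inr _ =>
    have hfree (x : X) := injective_zpow_apply (zOrbit_infinite_of_isMinimalHomeo hTmin x)
    have hbij (x : X) := bijOn_crossings_orbitsWithin hSp hp1 hM (hfree x)
    refine ⟨fun x => (hbij x).finite_iff_finite.1 (Finset.finite_toSet _), ?_⟩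
    simp only [← (hbij _).ncard_eq, Set.ncard_coe_finset]
    exact continuous_card_crossings hT (continuous_jump_of_speedup hT hS hSp hM hfree) M

end Topology

end BoundedSpeedup

open BoundedSpeedup

theorem boundedSpeedup_orbit_number_general {X : Type*} [TopologicalSpace X] [T2Space X]
    [Nonempty X] {T : Equiv.Perm X} (hT : Continuous T) (hTmin : IsMinimalHomeo T)
    {p : X → ℕ} (hp1 : ∀ x, 1 ≤ p x) (hpbdd : ∃ M : ℕ, ∀ x, p x ≤ M)
    {S : Equiv.Perm X} (hS : Continuous S) (hSp : ∀ x, S x = (T ^ p x) x) :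
    ∃ c : ℕ, 0 < c ∧ ∀ x : X, (orbitsWithin S T x).ncard = c := by
  obtain ⟨M, hM⟩ := hpbdd
  obtain ⟨hfin, hcont⟩ := finite_and_continuous_ncard_orbitsWithin hT hTmin hS hSp hp1 hM
  obtain ⟨x₀⟩ := ‹Nonempty X›
  have hmem : zOrbit S x₀ ∈ orbitsWithin S T x₀ :=
    zOrbit_mem_orbitsWithin (sameCycle_apply_of_speedup hSp) .rfl
  refine ⟨(orbitsWithin S T x₀).ncard, (Set.ncard_pos (hfin x₀)).2 ⟨_, hmem⟩, fun x => ?_⟩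
  exact eq_of_isMinimalHomeo_of_invariant hTmin hcont
    (fun z => congrArg Set.ncard (orbitsWithin_apply S T z)) x x₀

/-- If `S` is a bounded speedup of a minimal Cantor system `(X,T)`, then
there is a positive integer `c` such that for every `x`, the set of `S`-orbits contained in
the `T`-orbit of `x` has cardinality exactly `c`. -/
theorem boundedSpeedup_orbit_number
    {X : Type*} [TopologicalSpace X] [CompactSpace X]
    [TopologicalSpace.MetrizableSpace X] [TotallyDisconnectedSpace X] [PerfectSpace X]
    [Nonempty X]
    (T : Equiv.Perm X) (hTc : Continuous T) (hTc' : Continuous T.symm)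
    (hTmin : IsMinimalHomeo T)
    (p : X → ℕ) (hp1 : ∀ x, 1 ≤ p x) (hpbdd : ∃ M : ℕ, ∀ x, p x ≤ M)
    (S : Equiv.Perm X) (hSc : Continuous S) (hSc' : Continuous S.symm)
    (hSp : ∀ x, S x = (T ^ p x) x) :
    ∃ c : ℕ, 0 < c ∧ ∀ x : X,
      {O : Set X | (∃ y : X, O = zOrbit S y) ∧ O ⊆ zOrbit T x}.ncard = c :=
  boundedSpeedup_orbit_number_general hTc hTmin hp1 hpbdd hSc hSp
end

section
/- Let (X,T) be a minimal Cantor system and let S be a bounded speedup of T, and suppose S is minimal. Then h(S) ≥ c·h(T), where c is the orbit number of the speedup and h denotes topological entropy. -/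
/-- `c` is the orbit number of the speedup `S` of `T`: every `T`-orbit is the union of exactly
`c` distinct `S`-orbits. -/
def IsOrbitNumber {X : Type*} (T S : Equiv.Perm X) (c : ℕ) : Prop :=
  0 < c ∧ ∀ x : X,
    {O : Set X | (∃ y : X, O = zOrbit S y) ∧ O ⊆ zOrbit T x}.ncard = c

/-!
Suppose that the jumps are at most `M`. Starting from a point `x`, each of the `c` orbits of `S`
inside the `T`-orbit of `x` is hit within `M` steps of `T`. The `c * n` points reached by following
these orbits for `n` steps of `S` are at pairwise distinct `T`-times after `x`, so one of the orbits
reaches time at least about `c * n`. As the jump function is locally constant, points with close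
`S`-orbits have the same jumps and therefore stay close along every intermediate iterate of `T`.
Hence an `S`-cover of length `n` becomes a `T`-cover of length `c * n` after replacing each of its
points by boundedly many translates, which does not affect the growth rate.
-/

open Set Filter Uniformity Dynamics Function

theorem finite_zOrbit_of_mem_periodicPts {X : Type*} {T : Equiv.Perm X} {x : X}
    (hx : x ∈ periodicPts T) : (zOrbit T x).Finite := by
  have hper : 0 < MulAction.period T x := minimalPeriod_pos_of_mem_periodicPts hx
  refine ((finite_Ico (0 : ℤ) (MulAction.period T x)).image fun k => (T ^ k) x).subset ?_
  rintro _ ⟨k, rfl⟩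
  refine ⟨k % MulAction.period T x, ⟨Int.emod_nonneg _ ?_, Int.emod_lt_of_pos _ ?_⟩,
    MulAction.zpow_mod_period_smul k (g := T) (a := x)⟩ <;> omega

section Minimal

variable {X : Type*} [TopologicalSpace X] [T1Space X] [PerfectSpace X] {T : Equiv.Perm X}

theorem IsMinimalHomeo.infinite_zOrbit (hT : IsMinimalHomeo T) (x : X) : (zOrbit T x).Infinite := by
  intro hfin
  have huniv : zOrbit T x = univ := hfin.isClosed.closure_eq.symm.trans (hT x).closure_eq
  exact infinite_of_mem_nhds x univ_mem (huniv ▸ hfin)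

theorem IsMinimalHomeo.iterate_injective (hT : IsMinimalHomeo T) (x : X) :
    Injective fun n : ℕ => T^[n] x := by
  refine .of_lt_imp_ne fun m n hlt heq => ?_
  have hper : T^[n - m] x = x := iterate_cancel T.injective heq.symm
  exact hT.infinite_zOrbit x
    (finite_zOrbit_of_mem_periodicPts (mk_mem_periodicPts (Nat.sub_pos_of_lt hlt) hper))

end Minimal

theorem continuous_of_isClosed_fiber {X Y : Type*} [TopologicalSpace X] [TopologicalSpace Y]
    {f : X → Y} (hfin : (range f).Finite) (hf : ∀ y, IsClosed (f ⁻¹' {y})) : Continuous f := by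
  refine continuous_iff_isClosed.2 fun s _ => ?_
  rw [← preimage_inter_range, ← biUnion_preimage_singleton]
  exact (hfin.subset inter_subset_right).isClosed_biUnion fun y _ => hf y

theorem continuous_jump {X : Type*} [TopologicalSpace X] [T2Space X] {T S : X → X} {p : X → ℕ}
    (hT : Continuous T) (hS : Continuous S) (haper : ∀ x, Injective fun n : ℕ => T^[n] x)
    (hpbdd : ∃ M, ∀ x, p x ≤ M) (hSp : ∀ x, S x = T^[p x] x) : Continuous p := by
  obtain ⟨M, hpM⟩ := hpbdd
  refine continuous_of_isClosed_fiber ((finite_Iic M).subset (range_subset_iff.2 hpM)) fun k => ?_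
  have hfiber : p ⁻¹' {k} = {x | S x = T^[k] x} :=
    ext fun x => by rw [mem_ofPred_eq, hSp]; exact (haper x).eq_iff.symm
  exact hfiber ▸ isClosed_eq hS (hT.iterate k)

section Speedup

variable {X : Type*} {T S : X → X} {p : X → ℕ}

theorem strictMono_birkhoffSum (hp : ∀ x, 1 ≤ p x) (x : X) :
    StrictMono fun n => birkhoffSum S p n x :=
  strictMono_nat_of_lt_succ fun n => by
    rw [birkhoffSum_succ]
    exact Nat.lt_add_of_pos_right (hp _)

theorem iterate_speedup (hSp : ∀ x, S x = T^[p x] x) (n : ℕ) (x : X) :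
    S^[n] x = T^[birkhoffSum S p n x] x := by
  induction n with
  | zero => rfl
  | succ n ih =>
    rw [birkhoffSum_succ, iterate_succ_apply', hSp, add_comm, iterate_add_apply, ih]

/-- The relation of having the same jump `p` and `U`-close `T`-orbits up to time `n`. -/
def jumpEntourage (T : X → X) (p : X → ℕ) (U : SetRel X X) (n : ℕ) : SetRel X X :=
  {a | p a.1 = p a.2} ∩ dynEntourage T U n

theorem jumpEntourage_mem_uniformity [UniformSpace X] (hT : UniformContinuous T)
    (hp : UniformContinuous p) {U : SetRel X X} (hU : U ∈ 𝓤 X) (n : ℕ) :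
    jumpEntourage T p U n ∈ 𝓤 X :=
  inter_mem (hp (DiscreteUniformity.relId_mem_uniformity ℕ)) (dynEntourage_mem_uniformity hT hU n)

theorem mem_dynEntourage_of_speedup (hSp : ∀ x, S x = T^[p x] x) {N : ℕ} (hpN : ∀ x, p x ≤ N)
    {U : SetRel X X} {n : ℕ} {x y : X}
    (h : (x, y) ∈ dynEntourage S (jumpEntourage T p U N) (n + 1)) :
    (x, y) ∈ dynEntourage T U (birkhoffSum S p n x + N) := by
  induction n generalizing x y with
  | zero =>
    rw [birkhoffSum_zero, zero_add]
    exact (mem_dynEntourage.1 h 0 one_pos).2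
  | succ n ih =>
    obtain ⟨hpxy : p x = p y, hstart⟩ := mem_dynEntourage.1 h 0 n.succ.succ_pos
    have htail : (S x, S y) ∈ dynEntourage T U (birkhoffSum S p n (S x) + N) :=
      ih (mem_dynEntourage.2 fun k hk => mem_dynEntourage.1 h (k + 1) (by omega))
    refine mem_dynEntourage.2 fun k hk => ?_
    rw [birkhoffSum_succ'] at hk
    rcases lt_or_ge k (p x) with hlt | hle
    · exact mem_dynEntourage.1 hstart k (hlt.trans_le (hpN x))
    · have hclose := mem_dynEntourage.1 htail (k - p x) (by omega)
      rwa [hSp x, hSp y, ← hpxy, ← iterate_add_apply, ← iterate_add_apply, Nat.sub_add_cancel hle]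
        at hclose

end Speedup

theorem exists_card_mul_succ_le_of_injective {ι : Type*} [Fintype ι] [Nonempty ι] {f : ι → ℕ → ℕ}
    (hmono : ∀ i, Monotone (f i)) (hinj : Injective (uncurry f)) (n : ℕ) :
    ∃ i, Fintype.card ι * (n + 1) ≤ f i n + 1 := by
  by_contra! hlt
  have hmaps : ∀ a ∈ (Finset.univ : Finset ι) ×ˢ Finset.range (n + 1),
      uncurry f a ∈ Finset.range (Fintype.card ι * (n + 1) - 1) := by
    rintro ⟨i, m⟩ ha
    simp only [Finset.mem_product, Finset.mem_univ, true_and, Finset.mem_range] at ha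
    have := hmono i (Nat.lt_succ_iff.1 ha)
    have := hlt i
    simp only [uncurry_apply_pair, Finset.mem_range]
    omega
  have hcard := Finset.card_le_card_of_injOn _ hmaps hinj.injOn
  rw [Finset.card_product, Finset.card_univ, Finset.card_range, Finset.card_range] at hcard
  have : 0 < Fintype.card ι * (n + 1) := Nat.mul_pos Fintype.card_pos n.succ_pos
  omega

section OrbitNumber

variable {X : Type*} {T S : Equiv.Perm X} {p : X → ℕ}

theorem sameCycle_iterate_right {x y : X} {n : ℕ} :
    S.SameCycle x (S^[n] y) ↔ S.SameCycle x y := by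
  rw [Equiv.Perm.iterate_eq_pow, Equiv.Perm.sameCycle_pow_right]

theorem zOrbit_eq_zOrbit {x y : X} (h : S.SameCycle x y) : zOrbit S x = zOrbit S y :=
  ext fun _ => ⟨h.symm.trans, h.trans⟩

theorem IsOrbitNumber.exists_representatives {c : ℕ} (hc : IsOrbitNumber T S c) (x : X) :
    ∃ z : Fin c → X, (∀ i, T.SameCycle x (z i)) ∧ ∀ i j, S.SameCycle (z i) (z j) → i = j := by
  obtain ⟨hpos, hcard⟩ := hc
  set A := {O : Set X | (∃ y : X, O = zOrbit S y) ∧ O ⊆ zOrbit T x}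
  have hA : A.Finite := finite_of_ncard_pos ((hcard x).symm ▸ hpos)
  have := hA.to_subtype
  have e : Fin c ≃ A := (Finite.equivFinOfCardEq (hcard x)).symm
  choose z hz using fun i => (e i).2.1
  refine ⟨z, fun i => (e i).2.2 (hz i ▸ ⟨0, rfl⟩), fun i j hij => e.injective (Subtype.ext ?_)⟩
  rw [hz i, hz j, zOrbit_eq_zOrbit hij]

theorem exists_iterate_sameCycle (hp : ∀ x, 1 ≤ p x) (hSp : ∀ x, S x = T^[p x] x) {x z : X}
    (hz : T.SameCycle x z) : ∃ r : ℕ, S.SameCycle z (T^[r] x) := by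
  obtain ⟨k, hk⟩ := hz
  obtain ⟨m, rfl | rfl⟩ := k.eq_nat_or_neg
  · refine ⟨m, ?_⟩
    rw [Equiv.Perm.iterate_eq_pow, ← zpow_natCast, hk]
  · have hx : T^[m] z = x := by
      rw [← hk, zpow_neg, zpow_natCast, Equiv.Perm.iterate_eq_pow, ← Equiv.Perm.mul_apply,
        mul_inv_cancel, Equiv.Perm.one_apply]
    have hm : m ≤ birkhoffSum S p m z := (strictMono_birkhoffSum hp z).le_apply
    refine ⟨birkhoffSum S p m z - m, ?_⟩
    rw [← hx, ← iterate_add_apply, Nat.sub_add_cancel hm, ← iterate_speedup hSp,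
      sameCycle_iterate_right]

theorem exists_lt_iterate_sameCycle (hp : ∀ x, 1 ≤ p x) (hSp : ∀ x, S x = T^[p x] x) {M : ℕ}
    (hpM : ∀ x, p x ≤ M) {x z : X} (hz : T.SameCycle x z) :
    ∃ r < M, S.SameCycle z (T^[r] x) := by
  classical
  have hex := exists_iterate_sameCycle hp hSp hz
  set r := Nat.find hex
  refine ⟨r, ?_, Nat.find_spec hex⟩
  set y := S.symm (T^[r] x)
  have hSy : T^[p y] y = T^[r] x := by rw [← hSp, Equiv.apply_symm_apply]
  -- A jump of length at most `r` would start at an earlier point `T^[r - p y] x` of the orbit.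
  suffices r < p y from this.trans_le (hpM y)
  by_contra! hle
  have hy : T^[r - p y] x = y := by
    rw [← Nat.add_sub_of_le hle, iterate_add_apply] at hSy
    exact (T.injective.iterate _ hSy).symm
  refine Nat.find_min hex (Nat.sub_lt_self (hp y) hle) ?_
  rw [hy, Equiv.Perm.sameCycle_symm_apply_right]
  exact Nat.find_spec hex

theorem exists_fast_orbit (hp : ∀ x, 1 ≤ p x) (hSp : ∀ x, S x = T^[p x] x) {M : ℕ}
    (hpM : ∀ x, p x ≤ M) {c : ℕ} (hc : IsOrbitNumber T S c) (x : X) (n : ℕ) :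
    ∃ r < M, c * (n + 1) ≤ r + birkhoffSum S p n (T^[r] x) + 1 := by
  obtain ⟨z, hzT, hzS⟩ := hc.exists_representatives x
  choose r hrM hr using fun i => exists_lt_iterate_sameCycle hp hSp hpM (hzT i)
  let time (i : Fin c) (m : ℕ) : ℕ := r i + birkhoffSum S p m (T^[r i] x)
  have hmono (i : Fin c) : StrictMono (time i) := (strictMono_birkhoffSum hp _).const_add _
  have htime (i : Fin c) (m : ℕ) : S.SameCycle (z i) (T^[time i m] x) := by
    rw [show time i m = birkhoffSum S p m (T^[r i] x) + r i from add_comm _ _, iterate_add_apply,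
      ← iterate_speedup hSp, sameCycle_iterate_right]
    exact hr i
  have hinj : Injective (uncurry time) := by
    rintro ⟨i, m⟩ ⟨j, l⟩ (heq : time i m = time j l)
    obtain rfl : i = j := hzS i j ((htime i m).trans (heq ▸ (htime j l).symm))
    rw [(hmono i).injective heq]
  have : Nonempty (Fin c) := ⟨⟨0, hc.1⟩⟩
  obtain ⟨i, hi⟩ := exists_card_mul_succ_le_of_injective (fun i => (hmono i).monotone) hinj n
  exact ⟨r i, hrM i, by rwa [Fintype.card_fin] at hi⟩

theorem isDynCoverOf_speedup (hp : ∀ x, 1 ≤ p x) (hSp : ∀ x, S x = T^[p x] x) {M : ℕ}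
    (hpM : ∀ x, p x ≤ M) {c : ℕ} (hc : IsOrbitNumber T S c) {U : SetRel X X} {n : ℕ} {s : Set X}
    (hs : IsDynCoverOf S univ (jumpEntourage T p U (M + 1)) (n + 1) s) :
    IsDynCoverOf T univ U (c * (n + 1)) (image2 (fun j x => T^[j] x) (Iic M) s) := by
  intro x _
  obtain ⟨x₀, rfl⟩ := T.surjective.iterate M x
  obtain ⟨r, hrM, hr⟩ := exists_fast_orbit hp hSp hpM hc x₀ n
  obtain ⟨y, hys, hy⟩ := hs (mem_univ (T^[r] x₀))
  refine ⟨T^[M - r] y, ⟨M - r, Nat.sub_le _ _, y, hys, rfl⟩, mem_dynEntourage.2 fun k hk => ?_⟩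
  have hball := mem_dynEntourage_of_speedup hSp (fun x => (hpM x).trans M.le_succ) hy
  have hclose := mem_dynEntourage.1 hball (k + (M - r)) (by omega)
  rwa [iterate_add_apply, iterate_add_apply, ← iterate_add_apply T (M - r) r,
    Nat.sub_add_cancel hrM.le] at hclose

theorem coverMincard_mul_le (hp : ∀ x, 1 ≤ p x) (hSp : ∀ x, S x = T^[p x] x) {M : ℕ}
    (hpM : ∀ x, p x ≤ M) {c : ℕ} (hc : IsOrbitNumber T S c) (U : SetRel X X) (n : ℕ) :
    coverMincard T univ U (c * (n + 1)) ≤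
      (M + 1 : ℕ) * coverMincard S univ (jumpEntourage T p U (M + 1)) (n + 1) := by
  classical
  set V := jumpEntourage T p U (M + 1)
  rcases eq_top_or_lt_top (coverMincard S univ V (n + 1)) with htop | hfin
  · rw [htop, ENat.mul_top (by simp)]
    exact le_top
  obtain ⟨s, hs, hcard⟩ := (coverMincard_finite_iff _ _ _ _).1 hfin
  have hcover : IsDynCoverOf T univ U (c * (n + 1))
      (Finset.image₂ (fun j x => T^[j] x) (Finset.Iic M) s : Finset X) := by
    rw [Finset.coe_image₂, Finset.coe_Iic]
    exact isDynCoverOf_speedup hp hSp hpM hc hs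
  calc coverMincard T univ U (c * (n + 1))
      ≤ (Finset.image₂ (fun j x => T^[j] x) (Finset.Iic M) s).card := hcover.coverMincard_le_card
    _ ≤ ((Finset.Iic M).card * s.card : ℕ) := Nat.cast_le.2 (Finset.card_image₂_le _ _ _)
    _ = (M + 1 : ℕ) * coverMincard S univ V (n + 1) := by
      rw [Nat.card_Iic, Nat.cast_mul, hcard]

end OrbitNumber

theorem mul_coverEntropyEntourage_le {X Y : Type*} {T : X → X} {S : Y → Y} {F : Set X} {G : Set Y}
    {U : SetRel X X} {V : SetRel Y Y} {c : ℕ} (hc : c ≠ 0) (K : ℕ)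
    (h : ∀ᶠ n in atTop, coverMincard T F U (c * n) ≤ K * coverMincard S G V n) :
    c * coverEntropyEntourage T F U ≤ coverEntropyEntourage S G V := by
  have hmono : Monotone fun n => (coverMincard T F U n).toENNReal :=
    fun _ _ hle => ENat.toENNReal_mono (coverMincard_monotone_time T F U hle)
  rw [coverEntropyEntourage, ← hmono.expGrowthSup_comp_mul hc]
  refine ExpGrowth.expGrowthSup_le_of_eventually_le (ENNReal.natCast_ne_top K) ?_
  filter_upwards [h] with n hn
  simpa only [ENat.toENNReal_mul, ENat.toENNReal_coe] using ENat.toENNReal_mono hn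

theorem mul_coverEntropy_le {X : Type*} [UniformSpace X] {T : X → X} {F : Set X} {c : ℕ}
    (hc : c ≠ 0) {a : EReal} (h : ∀ U ∈ 𝓤 X, c * coverEntropyEntourage T F U ≤ a) :
    c * coverEntropy T F ≤ a := by
  have hle (b : EReal) : c * b ≤ a ↔ b ≤ a / c := by
    rw [EReal.le_div_iff_mul_le (by exact_mod_cast hc.pos) (EReal.natCast_ne_top c), mul_comm]
  exact (hle _).2 (iSup₂_le fun U hU => (hle _).1 (h U hU))

theorem boundedSpeedup_entropy_lower_bound_general {X : Type*} [UniformSpace X]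
    (T : Equiv.Perm X) (hT : UniformContinuous T)
    (p : X → ℕ) (hp : ∀ x, 1 ≤ p x) (hpbdd : ∃ M : ℕ, ∀ x, p x ≤ M) (hpc : UniformContinuous p)
    (S : Equiv.Perm X) (hSp : ∀ x, S x = (T ^ p x) x)
    (c : ℕ) (hc : IsOrbitNumber T S c) :
    (c : EReal) * coverEntropy T univ ≤ coverEntropy S univ := by
  obtain ⟨M, hpM⟩ := hpbdd
  simp only [← Equiv.Perm.iterate_eq_pow] at hSp
  refine mul_coverEntropy_le hc.1.ne' fun U hU => ?_
  calc c * coverEntropyEntourage T univ U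
      ≤ coverEntropyEntourage S univ (jumpEntourage T p U (M + 1)) := by
        refine mul_coverEntropyEntourage_le hc.1.ne' (M + 1) ?_
        filter_upwards [eventually_gt_atTop 0] with n hn
        obtain ⟨n, rfl⟩ := Nat.exists_eq_add_one.2 hn
        exact coverMincard_mul_le hp hSp hpM hc U n
    _ ≤ coverEntropy S univ :=
        coverEntropyEntourage_le_coverEntropy _ _ (jumpEntourage_mem_uniformity hT hpc hU (M + 1))

/-- If `S` is a minimal bounded speedup of a minimal Cantor system `(X,T)`
with orbit number `c`, then `h(S) ≥ c · h(T)`, where `h` is topological entropy. -/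
theorem boundedSpeedup_entropy_lower_bound
    {X : Type*} [MetricSpace X] [CompactSpace X]
    [TotallyDisconnectedSpace X] [PerfectSpace X] [Nonempty X]
    (T : Equiv.Perm X) (hTc : Continuous T) (hTc' : Continuous T.symm)
    (hTmin : IsMinimalHomeo T)
    (p : X → ℕ) (hp1 : ∀ x, 1 ≤ p x) (hpbdd : ∃ M : ℕ, ∀ x, p x ≤ M)
    (S : Equiv.Perm X) (hSc : Continuous S) (hSc' : Continuous S.symm)
    (hSp : ∀ x, S x = (T ^ p x) x) (hSmin : IsMinimalHomeo S)
    (c : ℕ) (hc : IsOrbitNumber T S c) :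
    (c : EReal) * Dynamics.coverEntropy (⇑T) Set.univ ≤
      Dynamics.coverEntropy (⇑S) Set.univ := by
  have hp : Continuous p := continuous_jump hTc hSc hTmin.iterate_injective hpbdd
    (by simpa only [Equiv.Perm.iterate_eq_pow] using hSp)
  exact boundedSpeedup_entropy_lower_bound_general T
    (CompactSpace.uniformContinuous_of_continuous hTc) p hp1 hpbdd
    (CompactSpace.uniformContinuous_of_continuous hp) S hSp c hc
end

section
/- Let (X,T) be a minimal Cantor system and let S be a minimal bounded speedup of T with jump function p and orbit number c. If every S-invariant Borel probability measure on X is T-invariant and every T-invariant Borel probability measure is S-invariant (i.e. M(X,T) = M(X,S)), then h(S) = c·h(T), where h denotes topological entropy. -/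
open MeasureTheory

/-! The entropy of a speedup is that of a time change: if the Birkhoff averages of the jump function
`p` along `S` converge uniformly to a constant `a`, then `n` steps of `S` amount to `a n + o(n)`
steps of `T`, uniformly in the starting point, so that `h(S) = a h(T)`. Compactness of the space of
probability measures gives this uniform convergence as soon as `∫ p dμ = a` for all `S`-invariant
`μ`. Finally, a `T`-invariant `μ` satisfies `∫ p dμ = ∑ j, μ {x | j < p x} =
∑ j, μ {x | j < p (T⁻ʲ x)}`, and the last sum is the mean number of `S`-jumps that pass over
`x`: there is exactly one for each `S`-orbit contained in the `T`-orbit of `x`, `c` in total. -/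

open Filter Topology Dynamics Set ExpGrowth Function
open scoped ENNReal BoundedContinuousFunction

/-- `S` is the speedup of `T` with (positive) jump function `p`. Only forward iterates
occur, so `T` and `S` are arbitrary self-maps. -/
structure IsSpeedup {X : Type*} (T S : X → X) (p : X → ℕ) : Prop where
  jump_pos : ∀ x, 0 < p x
  apply_eq : ∀ x, S x = T^[p x] x

/-- Aperiodicity (freeness) of a bijection: no point is periodic. -/
def IsAperiodic {X : Type*} (T : Equiv.Perm X) : Prop :=
  ∀ x, Injective fun n : ℤ => (T ^ n) x

/-! ### Entropy of a time change -/

section Entropy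

variable {X : Type*} {T S : X → X} {p : X → ℕ} {F : Set X} {U V : SetRel X X}

lemma coverMincard_le_of_dynEntourage_subset {m n : ℕ}
    (h : dynEntourage T V m ⊆ dynEntourage S U n) :
    coverMincard S F U n ≤ coverMincard T F V m :=
  biInf_mono fun _ hs => SetRel.IsCover.mono_entourage h hs

lemma expGrowthSup_coverMincard_comp {v : ℕ → ℕ} {a : EReal}
    (hv : Tendsto (fun n => (v n : EReal) / n) atTop (𝓝 a)) (ha : a ≠ 0) (ha' : a ≠ ⊤) :
    expGrowthSup (fun n => ((coverMincard T F V (v n) : ℕ∞) : ℝ≥0∞)) =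
      a * coverEntropyEntourage T F V := by
  have hmono : Monotone fun n => ((coverMincard T F V n : ℕ∞) : ℝ≥0∞) := fun _ _ h =>
    ENat.toENNReal_mono (coverMincard_monotone_time T F V h)
  rw [coverEntropyEntourage, ← hmono.expGrowthSup_comp hv ha ha']
  rfl

lemma exists_le_lt_succ_of_lt {α : Type*} [LinearOrder α] {f : ℕ → α} {a : α} {n : ℕ}
    (h₀ : f 0 ≤ a) (hn : a < f n) : ∃ k < n, f k ≤ a ∧ a < f (k + 1) := by
  induction n with
  | zero => exact absurd hn h₀.not_gt
  | succ n ih =>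
    by_cases h : a < f n
    · obtain ⟨k, hk, hfk⟩ := ih h
      exact ⟨k, hk.trans n.lt_succ_self, hfk⟩
    · exact ⟨n, n.lt_succ_self, not_lt.1 h, hn⟩

lemma birkhoffSum_eq_of_mem_dynEntourage (hV : ∀ x y, (x, y) ∈ V → p x = p y) {x y : X} {n : ℕ}
    (h : (x, y) ∈ dynEntourage S V n) : birkhoffSum S p n x = birkhoffSum S p n y :=
  Finset.sum_congr rfl fun k hk => hV _ _ (mem_dynEntourage.1 h k (Finset.mem_range.1 hk))

namespace IsSpeedup

lemma iterate_apply (h : IsSpeedup T S p) (n : ℕ) (x : X) :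
    S^[n] x = T^[birkhoffSum S p n x] x := by
  induction n with
  | zero => simp
  | succ n ih =>
    rw [iterate_succ_apply', birkhoffSum_succ, add_comm, iterate_add_apply, ← ih, h.apply_eq]

lemma strictMono_birkhoffSum (h : IsSpeedup T S p) (x : X) :
    StrictMono fun n => birkhoffSum S p n x :=
  strictMono_nat_of_lt_succ fun n => by
    rw [birkhoffSum_succ]
    exact Nat.lt_add_of_pos_right (h.jump_pos _)

lemma dynEntourage_subset (h : IsSpeedup T S p) (hVU : V ⊆ U)
    (hV : ∀ x y, (x, y) ∈ V → p x = p y) {n m : ℕ} (hm : ∀ x, birkhoffSum S p n x ≤ m) :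
    dynEntourage T V m ⊆ dynEntourage S U n := by
  rintro ⟨x, y⟩ hxy
  suffices H : ∀ k ≤ n, (x, y) ∈ dynEntourage S V k from
    dynEntourage_monotone S n hVU (H n le_rfl)
  intro k hk
  induction k with
  | zero => simp
  | succ k ih =>
    have hsum := birkhoffSum_eq_of_mem_dynEntourage hV (ih (k.le_succ.trans hk))
    rw [mem_dynEntourage, Nat.forall_lt_succ_right]
    refine ⟨mem_dynEntourage.1 (ih (k.le_succ.trans hk)), ?_⟩
    rw [h.iterate_apply, h.iterate_apply, ← hsum]
    exact mem_dynEntourage.1 hxy _ ((h.strictMono_birkhoffSum x hk).trans_le (hm x))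

lemma subset_dynEntourage (h : IsSpeedup T S p) {M : ℕ} (hM : ∀ x, p x ≤ M)
    (hVU : V ⊆ dynEntourage T U M) (hV : ∀ x y, (x, y) ∈ V → p x = p y) {n m : ℕ}
    (hm : ∀ x, m ≤ birkhoffSum S p n x) : dynEntourage S V n ⊆ dynEntourage T U m := by
  rintro ⟨x, y⟩ hxy
  refine mem_dynEntourage.2 fun i hi => ?_
  obtain ⟨k, hkn, hki, hik⟩ := exists_le_lt_succ_of_lt (f := fun k => birkhoffSum S p k x)
    (by simp) (hi.trans_le (hm x))
  have hsum := birkhoffSum_eq_of_mem_dynEntourage hV (dynEntourage_antitone S V hkn.le hxy)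
  have hiM : i - birkhoffSum S p k x < M := by
    rw [birkhoffSum_succ] at hik
    have := hM (S^[k] x)
    lia
  have hmem := mem_dynEntourage.1 (hVU (mem_dynEntourage.1 hxy k hkn)) _ hiM
  rwa [h.iterate_apply, h.iterate_apply, ← hsum, ← iterate_add_apply, ← iterate_add_apply,
    Nat.sub_add_cancel hki] at hmem

end IsSpeedup

lemma bddAbove_range_birkhoffSum (hp : BddAbove (range p)) (n : ℕ) :
    BddAbove (range (birkhoffSum S p n)) := by
  obtain ⟨M, hM⟩ := hp
  refine ⟨n * M, forall_mem_range.2 fun x => ?_⟩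
  simpa [birkhoffSum] using
    Finset.sum_le_card_nsmul (Finset.range n) _ M fun k _ => hM (mem_range_self (S^[k] x))

lemma tendsto_birkhoffSum_div {a : ℝ}
    (hu : TendstoUniformly (birkhoffAverage ℝ S fun x => (p x : ℝ)) (fun _ => a) atTop)
    (x : ℕ → X) :
    Tendsto (fun n => ((birkhoffSum S p n (x n) : ℕ) : EReal) / n) atTop (𝓝 a) := by
  have hreal : Tendsto (fun n => birkhoffAverage ℝ S (fun y => (p y : ℝ)) n (x n)) atTop (𝓝 a) :=
    (tendsto_prod_top_iff.2 hu).comp (f := fun n => (n, x n)) (tendsto_id.prodMk tendsto_top)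
  refine ((continuous_coe_real_ereal.tendsto a).comp hreal).congr fun n => ?_
  have hcast : birkhoffAverage ℝ S (fun y => (p y : ℝ)) n (x n) =
      (birkhoffSum S p n (x n) : ℕ) / n := by
    simp [birkhoffAverage, birkhoffSum, div_eq_inv_mul]
  rw [comp_apply, hcast, EReal.coe_div, EReal.coe_natCast, EReal.coe_natCast]

namespace IsSpeedup

variable [UniformSpace X] [Nonempty X] {a : ℝ}

lemma coverEntropy_le_mul (h : IsSpeedup T S p) (hp : UniformContinuous p)
    (hbdd : BddAbove (range p)) (ha : 0 < a)
    (hu : TendstoUniformly (birkhoffAverage ℝ S fun x => (p x : ℝ)) (fun _ => a) atTop)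
    (F : Set X) : coverEntropy S F ≤ a * coverEntropy T F := by
  choose x hx using fun n => Nat.sSup_mem (range_nonempty (birkhoffSum S p n))
    (bddAbove_range_birkhoffSum hbdd n)
  have hmax (n : ℕ) (y : X) : birkhoffSum S p n y ≤ birkhoffSum S p n (x n) :=
    (hx n).symm ▸ le_csSup (bddAbove_range_birkhoffSum hbdd n) (mem_range_self y)
  refine iSup₂_le fun U hU => ?_
  set V := U ∩ {q : X × X | p q.1 = p q.2}
  have hV : V ∈ uniformity X := inter_mem hU (hp (DiscreteUniformity.relId_mem_uniformity ℕ))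
  calc coverEntropyEntourage S F U
      ≤ expGrowthSup fun n => ((coverMincard T F V (birkhoffSum S p n (x n)) : ℕ∞) : ℝ≥0∞) :=
        expGrowthSup_monotone fun n => ENat.toENNReal_mono <|
          coverMincard_le_of_dynEntourage_subset <|
            h.dynEntourage_subset inter_subset_left (fun _ _ hxy => hxy.2) (hmax n)
    _ = a * coverEntropyEntourage T F V :=
        expGrowthSup_coverMincard_comp (tendsto_birkhoffSum_div hu x)
          (EReal.coe_pos.2 ha).ne' (EReal.coe_ne_top a)
    _ ≤ a * coverEntropy T F := by
        gcongr
        exact coverEntropyEntourage_le_coverEntropy T F hV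

lemma mul_coverEntropy_le (h : IsSpeedup T S p) (hT : UniformContinuous T)
    (hp : UniformContinuous p) (hbdd : BddAbove (range p)) (ha : 0 < a)
    (hu : TendstoUniformly (birkhoffAverage ℝ S fun x => (p x : ℝ)) (fun _ => a) atTop)
    (F : Set X) : a * coverEntropy T F ≤ coverEntropy S F := by
  have ha₀ : (0 : EReal) < a := EReal.coe_pos.2 ha
  obtain ⟨M, hM⟩ := hbdd
  let x (n : ℕ) : X := argmin (birkhoffSum S p n)
  rw [mul_comm, ← EReal.le_div_iff_mul_le ha₀ (EReal.coe_ne_top a)]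
  refine iSup₂_le fun U hU => ?_
  rw [EReal.le_div_iff_mul_le ha₀ (EReal.coe_ne_top a), mul_comm]
  set V := dynEntourage T U M ∩ {q : X × X | p q.1 = p q.2}
  have hV : V ∈ uniformity X := inter_mem (dynEntourage_mem_uniformity hT hU M)
    (hp (DiscreteUniformity.relId_mem_uniformity ℕ))
  calc a * coverEntropyEntourage T F U
      = expGrowthSup fun n => ((coverMincard T F U (birkhoffSum S p n (x n)) : ℕ∞) : ℝ≥0∞) :=
        (expGrowthSup_coverMincard_comp (tendsto_birkhoffSum_div hu x) ha₀.ne'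
          (EReal.coe_ne_top a)).symm
    _ ≤ coverEntropyEntourage S F V :=
        expGrowthSup_monotone fun n => ENat.toENNReal_mono <|
          coverMincard_le_of_dynEntourage_subset <|
            h.subset_dynEntourage (fun y => hM (mem_range_self y)) inter_subset_left
              (fun _ _ hxy => hxy.2) fun y => argmin_le (birkhoffSum S p n) y
    _ ≤ coverEntropy S F := coverEntropyEntourage_le_coverEntropy S F hV

theorem coverEntropy_eq_mul (h : IsSpeedup T S p) (hT : UniformContinuous T)
    (hp : UniformContinuous p) (hbdd : BddAbove (range p)) (ha : 0 < a)
    (hu : TendstoUniformly (birkhoffAverage ℝ S fun x => (p x : ℝ)) (fun _ => a) atTop)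
    (F : Set X) : coverEntropy S F = a * coverEntropy T F :=
  (h.coverEntropy_le_mul hp hbdd ha hu F).antisymm (h.mul_coverEntropy_le hT hp hbdd ha hu F)

end IsSpeedup

end Entropy

/-! ### Uniform convergence of Birkhoff averages -/

section Birkhoff

variable {X : Type*} [MeasurableSpace X]

/-- The empirical measure of the orbit segment `x, S x, …, Sⁿ x`; it has length `n + 1` so as to be
a probability measure for every `n`. -/
noncomputable def empiricalMeasure (S : X → X) (n : ℕ) (x : X) : ProbabilityMeasure X :=
  ⟨((n + 1 : ℕ) : ℝ≥0∞)⁻¹ • ∑ k ∈ Finset.range (n + 1), Measure.dirac (S^[k] x), ⟨by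
    simpa using ENNReal.inv_mul_cancel (a := n + 1) (by simp) (by finiteness)⟩⟩

variable [TopologicalSpace X]

lemma integral_empiricalMeasure [OpensMeasurableSpace X] (S : X → X) (n : ℕ) (x : X)
    (g : X →ᵇ ℝ) :
    ∫ y, g y ∂(empiricalMeasure S n x : Measure X) = birkhoffAverage ℝ S g (n + 1) x := by
  rw [empiricalMeasure, ProbabilityMeasure.coe_mk, integral_smul_measure,
    integral_finsetSum_measure fun k _ => g.integrable (Measure.dirac _), birkhoffAverage,
    birkhoffSum, ENNReal.toReal_inv, ENNReal.toReal_natCast]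
  congr 1
  exact Finset.sum_congr rfl fun k _ =>
    integral_dirac' _ _ g.continuous.measurable.stronglyMeasurable

variable [BorelSpace X] {S : X → X}

lemma measurePreserving_of_tendsto_empiricalMeasure [HasOuterApproxClosed X]
    (hS : Continuous S) {ι : Type*} {l : Filter ι} [NeBot l] {n : ι → ℕ} (hn : Tendsto n l atTop)
    {x : ι → X} {μ : ProbabilityMeasure X}
    (hμ : Tendsto (fun i => empiricalMeasure S (n i) (x i)) l (𝓝 μ)) :
    MeasurePreserving S (μ : Measure X) μ := by
  have hlim (g : X →ᵇ ℝ) : Tendsto (fun i => birkhoffAverage ℝ S g (n i + 1) (x i)) l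
      (𝓝 (∫ y, g y ∂(μ : Measure X))) := by
    simpa only [integral_empiricalMeasure] using
      ProbabilityMeasure.tendsto_iff_forall_integral_tendsto.1 hμ g
  have := Measure.isProbabilityMeasure_map (μ := (μ : Measure X)) hS.aemeasurable
  refine ⟨hS.measurable, ext_of_forall_integral_eq_of_IsFiniteMeasure fun g => ?_⟩
  rw [integral_map hS.aemeasurable g.continuous.aestronglyMeasurable]
  let gS : X →ᵇ ℝ := g.compContinuous ⟨S, hS⟩
  have hdist (i : ι) : dist (birkhoffAverage ℝ S gS (n i + 1) (x i))
      (birkhoffAverage ℝ S g (n i + 1) (x i)) ≤ 2 * ‖g‖ / ((n i + 1 : ℕ) : ℝ) := by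
    have hshift : birkhoffAverage ℝ S gS (n i + 1) (x i) =
        birkhoffAverage ℝ S g (n i + 1) (S (x i)) := by
      simp [birkhoffAverage, birkhoffSum, gS, ← iterate_succ_apply', iterate_succ_apply]
    rw [hshift, dist_birkhoffAverage_apply_birkhoffAverage]
    gcongr
    exact g.dist_le_two_norm _ _
  have hzero : Tendsto (fun i => 2 * ‖g‖ / ((n i + 1 : ℕ) : ℝ)) l (𝓝 0) :=
    tendsto_const_nhds.div_atTop <|
      tendsto_natCast_atTop_atTop.comp ((tendsto_add_atTop_nat 1).comp hn)
  have hlim₀ := squeeze_zero (fun _ => dist_nonneg) hdist hzero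
  exact eq_of_dist_eq_zero (tendsto_nhds_unique ((hlim gS).dist (hlim g)) hlim₀)

lemma tendstoUniformly_birkhoffAverage_of_integral_eq [T2Space X] [CompactSpace X]
    [HasOuterApproxClosed X] (hS : Continuous S) (f : X →ᵇ ℝ) {a : ℝ}
    (hf : ∀ μ : Measure X, IsProbabilityMeasure μ → MeasurePreserving S μ μ → ∫ x, f x ∂μ = a) :
    TendstoUniformly (birkhoffAverage ℝ S f) (fun _ => a) atTop := by
  rw [← tendsto_prod_top_iff, tendsto_iff_ultrafilter]
  intro G hG
  have hfst : Tendsto Prod.fst (G : Filter (ℕ × X)) atTop := tendsto_fst.mono_left hG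
  let ν (q : ℕ × X) : ProbabilityMeasure X := empiricalMeasure S (q.1 - 1) q.2
  obtain ⟨μ, -, hμ⟩ := isCompact_univ.ultrafilter_le_nhds (G.map ν) (by simp)
  have hμ_inv := measurePreserving_of_tendsto_empiricalMeasure hS
    ((tendsto_sub_atTop_nat 1).comp hfst) hμ
  rw [← hf μ inferInstance hμ_inv]
  refine (ProbabilityMeasure.tendsto_iff_forall_integral_tendsto.1
    (show Tendsto ν G (𝓝 μ) from hμ) f).congr' ?_
  filter_upwards [hfst.eventually (eventually_ge_atTop 1)] with q hq
  rw [integral_empiricalMeasure, Nat.sub_add_cancel hq]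
  rfl

end Birkhoff

/-! ### Counting the jumps over a point -/

section Count

lemma existsUnique_le_lt_succ {f : ℤ → ℤ} (hf : StrictMono f) (m : ℤ) :
    ∃! k, f k ≤ m ∧ m < f (k + 1) := by
  obtain ⟨_, ⟨u, rfl⟩, hu⟩ := not_bddAbove_iff.1 hf.not_bddAbove_range_of_isSuccArchimedean m
  obtain ⟨_, ⟨l, rfl⟩, hl⟩ := not_bddBelow_iff.1 hf.not_bddBelow_range_of_isPredArchimedean m
  obtain ⟨k, hk, hkmax⟩ := Int.exists_greatest_of_bdd (P := fun k => f k ≤ m)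
    ⟨u, fun z hz => (hf.lt_iff_lt.1 (hz.trans_lt hu)).le⟩ ⟨l, hl.le⟩
  refine ⟨k, ⟨hk, not_le.1 fun h => (hkmax _ h).not_gt (lt_add_one k)⟩, fun i ⟨hi, hi'⟩ => ?_⟩
  exact (hkmax i hi).antisymm (Int.lt_add_one_iff.1 (hf.lt_iff_lt.1 (hk.trans_lt hi')))

variable {X : Type*} {T S : Equiv.Perm X} {p : X → ℕ} {x y : X}

lemma zOrbit_eq_zOrbit_iff : zOrbit S x = zOrbit S y ↔ S.SameCycle x y :=
  ⟨fun h => show y ∈ zOrbit S x from h ▸ Equiv.Perm.SameCycle.refl S y,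
    fun h => Set.ext fun _ => ⟨h.symm.trans, h.trans⟩⟩

/-- The times `j` for which the jump from `T⁻ʲ x` to `T^(p (T⁻ʲ x) - j) x` passes over `x`, that is,
starts at or before `x` and lands strictly after `x` along the `T`-orbit. -/
def crossingTimes (T : Equiv.Perm X) (p : X → ℕ) (x : X) : Set ℕ :=
  {j | j < p ((T ^ (-(j : ℤ))) x)}

namespace IsSpeedup

lemma sameCycle (h : IsSpeedup T S p) (hxy : S.SameCycle x y) : T.SameCycle x y := by
  have step (z : X) : T.SameCycle z (S z) := ⟨p z, by simp [h.apply_eq, Equiv.Perm.iterate_eq_pow]⟩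
  obtain ⟨k, rfl⟩ := hxy
  induction k using Int.induction_on with
  | zero => exact .refl T x
  | succ k ih =>
    rw [add_comm, zpow_one_add]
    exact ih.trans (step _)
  | pred k ih =>
    refine ih.trans (.symm ?_)
    simpa [← Equiv.Perm.mul_apply, ← zpow_one_add] using step ((S ^ (-(k : ℤ) - 1)) x)

lemma exists_strictMono_zpow_apply_eq (h : IsSpeedup T S p) (hT : IsAperiodic T)
    (hxy : T.SameCycle x y) :
    ∃ f : ℤ → ℤ, StrictMono f ∧ (∀ k, (S ^ k) y = (T ^ f k) x) ∧
      ∀ k, f (k + 1) = f k + p ((T ^ f k) x) := by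
  have hex (k : ℤ) : ∃ m : ℤ, (T ^ m) x = (S ^ k) y := hxy.trans (h.sameCycle ⟨k, rfl⟩)
  choose f hf using hex
  have hsucc (k : ℤ) : f (k + 1) = f k + p ((T ^ f k) x) := by
    apply hT x
    simp only
    rw [hf, add_comm k, zpow_one_add, Equiv.Perm.mul_apply, ← hf k, h.apply_eq, add_comm, zpow_add,
      Equiv.Perm.mul_apply, zpow_natCast, Equiv.Perm.coe_pow]
  refine ⟨f, strictMono_int_of_lt_succ fun k => ?_, fun k => (hf k).symm, hsucc⟩
  have := h.jump_pos ((T ^ f k) x)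
  rw [hsucc]
  lia

lemma existsUnique_mem_crossingTimes (h : IsSpeedup T S p) (hT : IsAperiodic T)
    (hxy : T.SameCycle x y) :
    ∃! j, j ∈ crossingTimes T p x ∧ S.SameCycle y ((T ^ (-(j : ℤ))) x) := by
  obtain ⟨f, hf, hSf, hsucc⟩ := h.exists_strictMono_zpow_apply_eq hT hxy
  obtain ⟨k, ⟨hk, hk'⟩, hkuniq⟩ := existsUnique_le_lt_succ hf 0
  obtain ⟨j, hj⟩ : ∃ j : ℕ, -(j : ℤ) = f k := ⟨(-f k).toNat, by lia⟩
  refine ⟨j, ⟨?_, k, by rw [hSf, hj]⟩, ?_⟩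
  · change j < p _
    rw [hsucc, ← hj] at hk'
    lia
  · rintro i ⟨hi : i < p _, l, hl⟩
    have hfl : f l = -(i : ℤ) := hT x ((hSf l).symm.trans hl)
    have hlk : l = k := hkuniq l ⟨by lia, by rw [hsucc, hfl]; lia⟩
    rw [hlk] at hfl
    lia

lemma ncard_crossingTimes (h : IsSpeedup T S p) (hT : IsAperiodic T) {c : ℕ}
    (hc : IsOrbitNumber T S c) (x : X) : (crossingTimes T p x).ncard = c := by
  rw [← hc.2 x]
  refine Set.ncard_congr (fun j _ => zOrbit S ((T ^ (-(j : ℤ))) x)) ?_ ?_ ?_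
  · exact fun j _ => ⟨⟨_, rfl⟩, fun z hz =>
      Equiv.Perm.SameCycle.trans ⟨_, rfl⟩ (h.sameCycle hz)⟩
  · intro i j hi hj hij
    exact (h.existsUnique_mem_crossingTimes hT ⟨_, rfl⟩).unique ⟨hi, .refl S _⟩
      ⟨hj, zOrbit_eq_zOrbit_iff.1 hij⟩
  · rintro _ ⟨⟨y, rfl⟩, hy⟩
    obtain ⟨j, hj, hjy⟩ :=
      (h.existsUnique_mem_crossingTimes hT (hy (Equiv.Perm.SameCycle.refl S y))).exists
    exact ⟨j, hj, zOrbit_eq_zOrbit_iff.2 hjy.symm⟩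

lemma encard_crossingTimes (h : IsSpeedup T S p) (hT : IsAperiodic T) {c : ℕ}
    (hc : IsOrbitNumber T S c) (x : X) : (crossingTimes T p x).encard = c := by
  have hcard := h.ncard_crossingTimes hT hc x
  rw [← (finite_of_ncard_pos (hcard ▸ hc.1)).cast_ncard_eq, hcard]

end IsSpeedup

end Count

/-! ### The mean jump -/

section MeanJump

variable {X : Type*} [MeasurableSpace X] {μ : Measure X} {T S : Equiv.Perm X} {p : X → ℕ} {c : ℕ}

lemma lintegral_encard_setOf_mem {ι : Type*} [Countable ι] {A : ι → Set X}
    (hA : ∀ i, MeasurableSet (A i)) :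
    ∫⁻ x, ({i | x ∈ A i}.encard : ℝ≥0∞) ∂μ = ∑' i, μ (A i) := by
  have hcount (x : X) : ({i | x ∈ A i}.encard : ℝ≥0∞) = ∑' i, (A i).indicator 1 x := by
    rw [← ENNReal.tsum_set_one, tsum_subtype {i | x ∈ A i} fun _ => 1]
    rfl
  simp_rw [hcount]
  rw [lintegral_tsum fun i => (measurable_one.indicator (hA i)).aemeasurable]
  simp_rw [lintegral_indicator_one (hA _)]

namespace IsSpeedup

theorem lintegral_jump (h : IsSpeedup T S p) (hT : IsAperiodic T) (hc : IsOrbitNumber T S c)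
    (hp : Measurable p) (hμ : MeasurePreserving T.symm μ μ) : ∫⁻ x, p x ∂μ = c * μ univ := by
  have hA (j : ℕ) : MeasurableSet {x | j < p x} := measurableSet_lt measurable_const hp
  have hμT (j : ℕ) : MeasurePreserving (T ^ (-(j : ℤ))) μ μ := by
    rw [zpow_neg, zpow_natCast, ← inv_pow, Equiv.Perm.coe_pow]
    exact hμ.iterate j
  calc ∫⁻ x, p x ∂μ = ∫⁻ x, ({j : ℕ | j < p x}.encard : ℝ≥0∞) ∂μ := by
        simp [Nat.encard_range]
    _ = ∑' j : ℕ, μ {x | j < p x} := lintegral_encard_setOf_mem hA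
    _ = ∑' j : ℕ, μ ((T ^ (-(j : ℤ))) ⁻¹' {x | j < p x}) := by
        simp_rw [(hμT _).measure_preimage (hA _).nullMeasurableSet]
    _ = ∫⁻ x, ((crossingTimes T p x).encard : ℝ≥0∞) ∂μ :=
        (lintegral_encard_setOf_mem fun j => (hμT j).measurable (hA j)).symm
    _ = c * μ univ := by simp [h.encard_crossingTimes hT hc]

lemma integral_jump (h : IsSpeedup T S p) (hT : IsAperiodic T) (hc : IsOrbitNumber T S c)
    (hp : Measurable p) (hμ : MeasurePreserving T.symm μ μ) :
    ∫ x, (p x : ℝ) ∂μ = c * μ.real univ := by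
  rw [integral_eq_lintegral_of_nonneg_ae (.of_forall fun x => (p x).cast_nonneg)
    (measurable_from_nat.comp hp).aestronglyMeasurable]
  simp [h.lintegral_jump hT hc hp hμ, Measure.real]

end IsSpeedup

end MeanJump

/-! ### Continuity of the jump function and aperiodicity -/

section Topology

lemma continuous_of_isClosed_preimage_singleton {Y Z : Type*} [TopologicalSpace Y]
    [TopologicalSpace Z] {f : Y → Z} (hfin : (range f).Finite)
    (hf : ∀ z, IsClosed (f ⁻¹' {z})) : Continuous f := by
  refine continuous_iff_isClosed.2 fun s _ => ?_
  rw [← preimage_inter_range, ← biUnion_preimage_singleton]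
  exact (hfin.inter_of_right s).isClosed_biUnion fun z _ => hf z

variable {X : Type*} [TopologicalSpace X]

lemma IsSpeedup.continuous_jump [T2Space X] {T S : Equiv.Perm X} {p : X → ℕ}
    (h : IsSpeedup T S p) (hT : IsAperiodic T) (hTc : Continuous T) (hSc : Continuous S)
    (hp : BddAbove (range p)) : Continuous p := by
  refine continuous_of_isClosed_preimage_singleton hp.finite fun k => ?_
  have hfiber : p ⁻¹' {k} = {x | S x = T^[k] x} := by
    ext x
    have := (hT x).eq_iff (a := p x) (b := k)
    simpa [h.apply_eq, Equiv.Perm.iterate_eq_pow] using this.symm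
  rw [hfiber]
  exact isClosed_eq hSc (hTc.iterate k)

lemma IsMinimalHomeo.isAperiodic [T1Space X] [Infinite X] {T : Equiv.Perm X}
    (hT : IsMinimalHomeo T) : IsAperiodic T := by
  intro x a b (hab : (T ^ a) x = (T ^ b) x)
  by_contra hne
  have hfix : (T ^ (a - b)) x = x := by
    rw [sub_eq_neg_add, zpow_add, Equiv.Perm.mul_apply, hab, zpow_neg, ← Equiv.Perm.mul_apply,
      inv_mul_cancel, Equiv.Perm.one_apply]
  have hmod (n : ℤ) : (T ^ n) x = (T ^ (n % (a - b))) x := by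
    conv_lhs => rw [← Int.emod_add_mul_ediv n (a - b), zpow_add, zpow_mul, Equiv.Perm.mul_apply,
      Equiv.Perm.zpow_apply_eq_self_of_apply_eq_self hfix]
  have hfin : (range fun n : ℤ => (T ^ n) x).Finite :=
    ((finite_Ico 0 |a - b|).image fun n => (T ^ n) x).subset <| range_subset_iff.2 fun n =>
      ⟨n % (a - b), ⟨Int.emod_nonneg n (sub_ne_zero.2 hne), Int.emod_lt_abs n (sub_ne_zero.2 hne)⟩,
        (hmod n).symm⟩
  exact infinite_univ (α := X) (by rwa [← (hT x).closure_eq, hfin.isClosed.closure_eq])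

end Topology

/-! ### The entropy formula -/

lemma measurePreserving_iff_forall_measure_preimage {X Y : Type*} [MeasurableSpace X]
    [MeasurableSpace Y] {f : X → Y} (hf : Measurable f) {μ : Measure X} {ν : Measure Y} :
    MeasurePreserving f μ ν ↔ ∀ B, MeasurableSet B → μ (f ⁻¹' B) = ν B :=
  ⟨fun h _ hB => h.measure_preimage hB.nullMeasurableSet,
    fun h => ⟨hf, Measure.ext fun B hB => by rw [Measure.map_apply hf hB, h B hB]⟩⟩

theorem boundedSpeedup_entropy_eq_of_same_measures_general {X : Type*} [UniformSpace X]
    [CompactSpace X] [T2Space X] [HasOuterApproxClosed X] [Nonempty X] [MeasurableSpace X]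
    [BorelSpace X]
    {T S : Equiv.Perm X} (hTc : Continuous T) (hT : IsAperiodic T) {p : X → ℕ}
    (h : IsSpeedup T S p) (hp : BddAbove (range p)) (hSc : Continuous S) {c : ℕ}
    (hc : IsOrbitNumber T S c)
    (hMeas : ∀ μ : Measure X, IsProbabilityMeasure μ →
      MeasurePreserving S μ μ → MeasurePreserving T μ μ) (F : Set X) :
    coverEntropy S F = (c : EReal) * coverEntropy T F := by
  have hpc : Continuous p := h.continuous_jump hT hTc hSc hp
  let f : X →ᵇ ℝ := .mkOfCompact ⟨fun x => p x, continuous_of_discreteTopology.comp hpc⟩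
  have hint (μ : Measure X) (hμ : IsProbabilityMeasure μ) (hμS : MeasurePreserving S μ μ) :
      ∫ x, f x ∂μ = c := by
    have hμT : MeasurePreserving T.symm μ μ := MeasurePreserving.symm
      (hTc.homeoOfEquivCompactToT2 (f := T)).toMeasurableEquiv (hMeas μ hμ hμS)
    simpa [f] using h.integral_jump hT hc hpc.measurable hμT
  exact h.coverEntropy_eq_mul (CompactSpace.uniformContinuous_of_continuous hTc)
    (CompactSpace.uniformContinuous_of_continuous hpc) hp (Nat.cast_pos.2 hc.1)
    (tendstoUniformly_birkhoffAverage_of_integral_eq hSc f hint) F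

/-- If `S` is a minimal bounded speedup of a minimal Cantor system `(X,T)`
with orbit number `c`, and the `S`-invariant Borel probability measures coincide with the
`T`-invariant ones, then `h(S) = c · h(T)`. -/
theorem boundedSpeedup_entropy_eq_of_same_measures
    {X : Type*} [MetricSpace X] [CompactSpace X]
    [TotallyDisconnectedSpace X] [PerfectSpace X] [Nonempty X]
    [MeasurableSpace X] [BorelSpace X]
    (T : Equiv.Perm X) (hTc : Continuous T) (hTc' : Continuous T.symm)
    (hTmin : IsMinimalHomeo T)
    (p : X → ℕ) (hp1 : ∀ x, 1 ≤ p x) (hpbdd : ∃ M : ℕ, ∀ x, p x ≤ M)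
    (S : Equiv.Perm X) (hSc : Continuous S) (hSc' : Continuous S.symm)
    (hSp : ∀ x, S x = (T ^ p x) x) (hSmin : IsMinimalHomeo S)
    (c : ℕ) (hc : IsOrbitNumber T S c)
    (hMeas : ∀ μ : Measure X, IsProbabilityMeasure μ →
      ((∀ B : Set X, MeasurableSet B → μ (⇑S ⁻¹' B) = μ B) ↔
        (∀ B : Set X, MeasurableSet B → μ (⇑T ⁻¹' B) = μ B))) :
    Dynamics.coverEntropy (⇑S) Set.univ =
      (c : EReal) * Dynamics.coverEntropy (⇑T) Set.univ := by
  have : Infinite X := infinite_univ_iff.1 <|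
    infinite_of_mem_nhds (Classical.arbitrary X) univ_mem
  refine boundedSpeedup_entropy_eq_of_same_measures_general hTc hTmin.isAperiodic
    ⟨hp1, fun x => by rw [hSp, Equiv.Perm.iterate_eq_pow]⟩ ?_ hSc hc (fun μ hμ => ?_) univ
  · exact hpbdd.imp fun M hM => forall_mem_range.2 hM
  · rw [measurePreserving_iff_forall_measure_preimage hSc.measurable,
      measurePreserving_iff_forall_measure_preimage hTc.measurable]
    exact (hMeas μ hμ).1
end

section
/- Let (X,T) be an odometer system and let S be a bounded speedup of T which is minimal. Then (X,S) is topologically conjugate to (X,T): there exists a homeomorphism φ : X → X such that φ∘S = T∘φ. -/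
/-- Odometer data for `(X,T)`: nested cyclic Kakutani–Rokhlin partitions
`P(k) = {T^i A(k) : 0 ≤ i < m k}` which refine each other and separate points. -/
def IsOdometerData {X : Type*} [TopologicalSpace X] (T : Equiv.Perm X)
    (m : ℕ → ℕ) (A : ℕ → Set X) : Prop :=
  (2 ≤ m 0) ∧ (∀ k, m k ∣ m (k + 1)) ∧ (∀ k, 2 * m k ≤ m (k + 1)) ∧
  (∀ k, (A k).Nonempty ∧ IsClopen (A k)) ∧
  (∀ k, ∀ i < m k, ∀ j < m k, i ≠ j →
    Disjoint ((⇑(T ^ i)) '' A k) ((⇑(T ^ j)) '' A k)) ∧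
  (∀ k, (⋃ i < m k, (⇑(T ^ i)) '' A k) = Set.univ) ∧
  (∀ k, (⇑(T ^ m k)) '' A k = A k) ∧
  (∀ k, ∀ i < m (k + 1), ∃ j < m k, (⇑(T ^ i)) '' A (k + 1) ⊆ (⇑(T ^ j)) '' A k) ∧
  (∀ x y : X, x ≠ y → ∃ k, ∀ i < m k,
    ¬(x ∈ (⇑(T ^ i)) '' A k ∧ y ∈ (⇑(T ^ i)) '' A k))

/-!
Level `k` of the odometer is a factor map `f k` onto the rotation by `1` on `ZMod (m k)`. Since
`f k (S x) - f k x` is the residue of the jump `p x`, a level with `m k` large compared to the bound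
recovers `p` from `S`, so `p` is continuous and hence, by compactness, constant on the fibres of
`f k` for all large `k`. For these `k` the speedup permutes the fibres of `f k`, and as `S` has a
dense orbit, it permutes them in a single cycle of length `m k`. Listing the fibres in the order in
which `S` visits them gives a factor map `g k` of `(X, S)` onto the same rotation. The sequences `f`
and `g` embed both systems in the rotation by `1` on the product of the groups `ZMod (m k)`. There
the closure of an orbit is a coset of the closure of the integers, so the two images are translates
of each other.
-/

open Function Set

theorem semiconj_perm_zpow {X Y : Type*} {f : X → Y} {σ : Equiv.Perm X} {τ : Equiv.Perm Y}
    (h : Semiconj f σ τ) : ∀ n : ℤ, Semiconj f ⇑(σ ^ n) ⇑(τ ^ n)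
  | .ofNat n => h.iterate_right n
  | .negSucc n => (h.iterate_right (n + 1)).inverses_right
      (Equiv.apply_symm_apply (σ ^ (n + 1))) (Equiv.symm_apply_apply (τ ^ (n + 1)))

theorem continuous_of_continuous_zmod_cast {X : Type*} [TopologicalSpace X] {n : ℕ} [NeZero n]
    {p : X → ℤ} (hp : ∀ x, 2 * |p x| < n) (hc : Continuous fun x => (p x : ZMod n)) :
    Continuous p := by
  have hval (x : X) : (p x : ZMod n).valMinAbs = p x := by
    refine (ZMod.valMinAbs_spec _ _).2 ⟨rfl, ?_, ?_⟩ <;>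
      linarith [hp x, neg_abs_le (p x), le_abs_self (p x)]
  simpa only [comp_def, hval] using
    (continuous_of_discreteTopology (f := ZMod.valMinAbs (n := n))).comp hc

/-- `f` is a factor map of `(X, T)` to the rotation by `1` on `G`, not necessarily onto. Both the
levels of an odometer (`G` is a finite cyclic group) and its coordinate map to the product of these
groups are of this form. -/
structure IsRotationFactor {X G : Type*} [TopologicalSpace X] [TopologicalSpace G] [Add G] [One G]
    (T : Equiv.Perm X) (f : X → G) : Prop where
  continuous : Continuous f
  map_apply (x : X) : f (T x) = f x + 1

namespace IsRotationFactor

variable {X : Type*} [TopologicalSpace X] {T : Equiv.Perm X}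

theorem map_zpow_apply {G : Type*} [TopologicalSpace G] [AddGroupWithOne G] {f : X → G}
    (hf : IsRotationFactor T f) (n : ℤ) (x : X) : f ((T ^ n) x) = f x + n := by
  have h := semiconj_perm_zpow (τ := Equiv.addRight (1 : G)) hf.map_apply n x
  rwa [Equiv.zsmul_addRight, zsmul_one] at h

theorem pi {ι : Type*} {G : ι → Type*} [∀ i, TopologicalSpace (G i)] [∀ i, Add (G i)]
    [∀ i, One (G i)] {f : ∀ i, X → G i} (hf : ∀ i, IsRotationFactor T (f i)) :
    IsRotationFactor T fun x i => f i x where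
  continuous := continuous_pi fun i => (hf i).continuous
  map_apply x := funext fun i => (hf i).map_apply x

theorem sub_const {G : Type*} [TopologicalSpace G] [AddCommGroupWithOne G] [ContinuousSub G]
    {f : X → G} (hf : IsRotationFactor T f) (c : G) : IsRotationFactor T fun x => f x - c where
  continuous := hf.continuous.sub continuous_const
  map_apply x := by rw [hf.map_apply, add_sub_right_comm]

theorem surjective [Nonempty X] {n : ℕ} {f : X → ZMod n} (hf : IsRotationFactor T f) :
    Surjective f := by
  intro c
  obtain ⟨x⟩ := ‹Nonempty X›
  obtain ⟨j, hj⟩ := ZMod.intCast_surjective (c - f x)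
  exact ⟨(T ^ j) x, by rw [hf.map_zpow_apply, hj, add_sub_cancel]⟩

theorem continuous_jump {n : ℕ} [NeZero n] {f : X → ZMod n} (hf : IsRotationFactor T f)
    {S : X → X} (hS : Continuous S) {p : X → ℤ} (hSp : ∀ x, S x = (T ^ p x) x)
    (hp : ∀ x, 2 * |p x| < n) : Continuous p := by
  have hcast (x : X) : f (S x) - f x = p x := by
    rw [hSp, hf.map_zpow_apply, add_sub_cancel_left]
  exact continuous_of_continuous_zmod_cast hp
    (((hf.continuous.comp hS).sub hf.continuous).congr hcast)

theorem range_eq_closure_range_intCast [CompactSpace X] {G : Type*} [TopologicalSpace G]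
    [T2Space G] [AddGroupWithOne G] {f : X → G} (hf : IsRotationFactor T f) {x₀ : X}
    (hx₀ : Dense (range fun n : ℤ => (T ^ n) x₀)) (h0 : f x₀ = 0) :
    range f = closure (range fun n : ℤ => (n : G)) := by
  have horbit : (range fun n : ℤ => (n : G)) = f '' range fun n : ℤ => (T ^ n) x₀ := by
    rw [← range_comp]
    congr 1 with n
    simp [hf.map_zpow_apply, h0]
  rw [horbit, hf.continuous.isClosedMap.closure_image_eq_of_continuous hf.continuous,
    hx₀.closure_eq, image_univ]

/-- After a translation, both embeddings have the closure of the integers as their range. -/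
theorem exists_conjugacy [CompactSpace X] {Y : Type*} [TopologicalSpace Y] [CompactSpace Y]
    {S : Equiv.Perm Y} {G : Type*} [TopologicalSpace G] [T2Space G] [AddCommGroupWithOne G]
    [ContinuousSub G] {f : X → G} {g : Y → G} (hf : IsRotationFactor T f)
    (hg : IsRotationFactor S g) (hf_inj : Injective f) (hg_inj : Injective g) {x₀ : X} {y₀ : Y}
    (hx₀ : Dense (range fun n : ℤ => (T ^ n) x₀)) (hy₀ : Dense (range fun n : ℤ => (S ^ n) y₀)) :
    ∃ φ : Y ≃ₜ X, ∀ y, φ (S y) = T (φ y) := by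
  have hf' := hf.sub_const (f x₀)
  have hg' := hg.sub_const (g y₀)
  have hf_emb := (hf'.continuous.isClosedEmbedding (sub_left_injective.comp hf_inj)).isEmbedding
  have hg_emb := (hg'.continuous.isClosedEmbedding (sub_left_injective.comp hg_inj)).isEmbedding
  have hrange : range (fun y => g y - g y₀) = range fun x => f x - f x₀ :=
    (hg'.range_eq_closure_range_intCast hy₀ (sub_self _)).trans
      (hf'.range_eq_closure_range_intCast hx₀ (sub_self _)).symm
  let φ : Y ≃ₜ X := hg_emb.toHomeomorph.trans
    ((Homeomorph.setCongr hrange).trans hf_emb.toHomeomorph.symm)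
  have hφ (y : Y) : f (φ y) - f x₀ = g y - g y₀ :=
    congrArg Subtype.val (hf_emb.toHomeomorph.apply_symm_apply
      (Homeomorph.setCongr hrange (hg_emb.toHomeomorph y)))
  refine ⟨φ, fun y => hf_emb.injective ?_⟩
  rw [hφ, hg'.map_apply, hf'.map_apply, hφ]

end IsRotationFactor

/-- A sequence of maps whose fibres form finer and finer partitions of `X` (clopen if the targets
are discrete) which together separate points: the coordinate form of the partitions `P(k)` of an
odometer, without dynamics. -/
structure IsSeparatingTower {X : Type*} [TopologicalSpace X] {α : ℕ → Type*}
    [∀ k, TopologicalSpace (α k)] (f : ∀ k, X → α k) : Prop where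
  continuous (k : ℕ) : Continuous (f k)
  eq_of_succ_eq {k : ℕ} {x y : X} : f (k + 1) x = f (k + 1) y → f k x = f k y
  eq_of_forall_eq {x y : X} : (∀ k, f k x = f k y) → x = y

namespace IsSeparatingTower

variable {X : Type*} [TopologicalSpace X] {α : ℕ → Type*} [∀ k, TopologicalSpace (α k)]
  {f : ∀ k, X → α k}

theorem eq_of_le (hf : IsSeparatingTower f) {j k : ℕ} (hjk : j ≤ k) {x y : X}
    (h : f k x = f k y) : f j x = f j y := by
  induction k, hjk using Nat.le_induction with
  | base => exact h
  | succ k _ ih => exact ih (hf.eq_of_succ_eq h)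

theorem shift (hf : IsSeparatingTower f) (K : ℕ) : IsSeparatingTower fun k => f (K + k) where
  continuous k := hf.continuous (K + k)
  eq_of_succ_eq := hf.eq_of_succ_eq
  eq_of_forall_eq h := hf.eq_of_forall_eq fun k => hf.eq_of_le (Nat.le_add_left k K) (h k)

variable [CompactSpace X]

theorem exists_fiber_subset [∀ k, T1Space (α k)] (hf : IsSeparatingTower f) {U : Set X}
    (hU : IsOpen U) {x : X} (hx : x ∈ U) : ∃ k, f k ⁻¹' {f k x} ⊆ U := by
  refine exists_subset_nhds_of_compactSpace (V := fun k => f k ⁻¹' {f k x})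
    (directed_of_isDirected_le fun j k hjk y hy => hf.eq_of_le hjk hy)
    (fun k => isClosed_singleton.preimage (hf.continuous k)) fun y hy => ?_
  obtain rfl : y = x := hf.eq_of_forall_eq (mem_iInter.1 hy)
  exact hU.mem_nhds hx

theorem exists_forall_eq_imp_eq [∀ k, T2Space (α k)] {β : Type*} [TopologicalSpace β]
    [DiscreteTopology β] (hf : IsSeparatingTower f) {p : X → β} (hp : Continuous p) :
    ∃ k, ∀ x y, f k x = f k y → p x = p y := by
  have hopen : IsOpen {z : X × X | p z.1 = p z.2} :=
    (isOpen_discrete {w : β × β | w.1 = w.2}).preimage (hp.prodMap hp)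
  obtain ⟨k, hk⟩ := exists_subset_nhds_of_compactSpace
    (V := fun k => {z : X × X | f k z.1 = f k z.2})
    (directed_of_isDirected_le fun j k hjk z => hf.eq_of_le hjk)
    (fun k => isClosed_eq ((hf.continuous k).comp continuous_fst)
      ((hf.continuous k).comp continuous_snd))
    fun z hz => hopen.mem_nhds (congrArg p (hf.eq_of_forall_eq (mem_iInter.1 hz)))
  exact ⟨k, fun x y h => hk (a := (x, y)) h⟩

theorem isMinimalHomeo {m : ℕ → ℕ} {f : ∀ k, X → ZMod (m k)} (hf : IsSeparatingTower f)
    {T : Equiv.Perm X} (hfT : ∀ k, IsRotationFactor T (f k)) : IsMinimalHomeo T := by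
  intro x
  refine dense_iff_inter_open.2 fun U hU ⟨y, hy⟩ => ?_
  obtain ⟨k, hk⟩ := hf.exists_fiber_subset hU hy
  obtain ⟨n, hn⟩ := ZMod.intCast_surjective (f k y - f k x)
  refine ⟨(T ^ n) x, hk ?_, n, rfl⟩
  rw [mem_preimage, (hfT k).map_zpow_apply, hn, add_sub_cancel, mem_singleton_iff]

end IsSeparatingTower

theorem image_pow_mod {X : Type*} {T : Equiv.Perm X} {A : Set X} {m : ℕ}
    (hA : ⇑(T ^ m) '' A = A) (n : ℕ) : ⇑(T ^ (n % m)) '' A = ⇑(T ^ n) '' A := by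
  have himage (i : ℕ) : ⇑(T ^ i) '' A = (image T)^[i] A := by
    rw [← image_iterate_eq, Equiv.Perm.iterate_eq_pow]
  have hper : IsPeriodicPt (image T) m A := (himage m).symm.trans hA
  rw [himage, himage, hper.iterate_mod_apply]

theorem exists_isRotationFactor_of_cyclic_partition {X : Type*} [TopologicalSpace X]
    {T : Equiv.Perm X} (hT : Continuous T.symm) {m : ℕ} [NeZero m] {A : Set X} (hA : IsOpen A)
    (hdisj : ∀ i < m, ∀ j < m, i ≠ j → Disjoint (⇑(T ^ i) '' A) (⇑(T ^ j) '' A))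
    (hcover : ⋃ i < m, ⇑(T ^ i) '' A = univ) (hper : ⇑(T ^ m) '' A = A) :
    ∃ f : X → ZMod m, IsRotationFactor T f ∧ ∀ c, f ⁻¹' {c} = ⇑(T ^ c.val) '' A := by
  have hlevel (x : X) : ∃ c : ZMod m, x ∈ ⇑(T ^ c.val) '' A := by
    obtain ⟨i, hi, hx⟩ := mem_iUnion₂.1 (hcover ▸ mem_univ x)
    exact ⟨i, by rwa [ZMod.val_cast_of_lt hi]⟩
  choose f hf using hlevel
  have hf_eq {x : X} {c : ZMod m} (hx : x ∈ ⇑(T ^ c.val) '' A) : f x = c := by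
    by_contra hne
    exact disjoint_left.1 (hdisj _ (f x).val_lt _ c.val_lt ((ZMod.val_injective m).ne hne))
      (hf x) hx
  have hfiber (c : ZMod m) : f ⁻¹' {c} = ⇑(T ^ c.val) '' A :=
    Subset.antisymm (fun x hx => mem_singleton_iff.1 hx ▸ hf x) fun x hx => hf_eq hx
  refine ⟨f, ⟨continuous_discrete_rng.2 fun c => ?_, fun x => hf_eq ?_⟩, hfiber⟩
  · rw [hfiber, Equiv.image_eq_preimage_symm]
    exact hA.preimage (hT.iterate c.val)
  · have hval : (f x + 1).val = ((f x).val + 1) % m := by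
      rw [← ZMod.val_natCast, Nat.cast_succ, ZMod.natCast_zmod_val]
    rw [hval, image_pow_mod hper, pow_succ', Equiv.Perm.coe_mul, image_comp]
    exact mem_image_of_mem T (hf x)

namespace IsOdometerData

variable {X : Type*} [TopologicalSpace X] {T : Equiv.Perm X} {m : ℕ → ℕ} {A : ℕ → Set X}

theorem lt_height (h : IsOdometerData T m A) (k : ℕ) : k < m k := by
  obtain ⟨hm0, -, hgrowth, -⟩ := h
  induction k with
  | zero => lia
  | succ k ih => linarith [hgrowth k]

theorem exists_isSeparatingTower (h : IsOdometerData T m A) (hT : Continuous T.symm) :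
    ∃ f : ∀ k, X → ZMod (m k), (∀ k, IsRotationFactor T (f k)) ∧ IsSeparatingTower f := by
  have hm (k : ℕ) : NeZero (m k) := ⟨Nat.ne_zero_of_lt (h.lt_height k)⟩
  obtain ⟨-, -, -, hA, hdisj, hcover, hper, hrefine, hsep⟩ := h
  choose f hf hfiber using fun k => exists_isRotationFactor_of_cyclic_partition hT
    (hA k).2.isOpen (hdisj k) (hcover k) (hper k)
  have hmem (k : ℕ) (x : X) : x ∈ ⇑(T ^ (f k x).val) '' A k := hfiber k (f k x) ▸ rfl
  have hf_eq {k j : ℕ} (hj : j < m k) {x : X} (hx : x ∈ ⇑(T ^ j) '' A k) : f k x = j := by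
    rwa [← ZMod.val_cast_of_lt hj, ← hfiber] at hx
  refine ⟨f, hf, fun k => (hf k).continuous, fun {k x y} hxy => ?_, fun {x y} hxy => ?_⟩
  · obtain ⟨j, hj, hsub⟩ := hrefine k _ (f (k + 1) x).val_lt
    rw [hf_eq hj (hsub (hmem (k + 1) x)), hf_eq hj (hsub (hxy ▸ hmem (k + 1) y))]
  · by_contra hne
    obtain ⟨k, hk⟩ := hsep x y hne
    exact hk _ (f k x).val_lt ⟨hmem k x, hxy k ▸ hmem k y⟩

end IsOdometerData

theorem exists_equiv_zmod_of_forall_sameCycle {α : Type*} {σ : Equiv.Perm α} {a : α}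
    (h : ∀ b, σ.SameCycle a b) :
    ∃ e : α ≃ ZMod (Nat.card α), ∀ b, e (σ b) = e b + 1 := by
  have horbit (b : α) : b ∈ MulAction.orbit (Subgroup.zpowers σ) a := by
    obtain ⟨n, hn⟩ := h b
    exact ⟨⟨σ ^ n, n, rfl⟩, hn⟩
  let e : α ≃ ZMod (minimalPeriod (σ • ·) a) :=
    (Equiv.subtypeUnivEquiv horbit).symm.trans (MulAction.orbitZPowersEquiv σ a)
  have he (n : ℤ) : e ((σ ^ n) a) = n := by
    rw [← Equiv.eq_symm_apply]
    exact (congrArg Subtype.val (MulAction.orbitZPowersEquiv_symm_apply' σ a n)).symm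
  have hcard : Nat.card α = minimalPeriod (σ • ·) a := by
    rw [Nat.card_congr e, Nat.card_zmod]
  rw [hcard]
  refine ⟨e, fun b => ?_⟩
  obtain ⟨n, rfl⟩ := h b
  rw [← Equiv.Perm.mul_apply, ← zpow_one_add, add_comm, he, he, Int.cast_add, Int.cast_one]

theorem exists_isRotationFactor_of_map_fibers {X α : Type*} [TopologicalSpace X]
    [TopologicalSpace α] [DiscreteTopology α] [Finite α] {n : ℕ} (hn : Nat.card α = n)
    {S : Equiv.Perm X} {f : X → α} (hf : Continuous f) (hf_surj : Surjective f)
    (hS : ∀ x y, f x = f y → f (S x) = f (S y)) {x₀ : X}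
    (hx₀ : Dense (range fun n : ℤ => (S ^ n) x₀)) :
    ∃ g : X → ZMod n, IsRotationFactor S g ∧ ∀ x y, g x = g y → f x = f y := by
  subst hn
  obtain ⟨s, hs⟩ : ∃ s : α → α, Semiconj f S s :=
    ⟨fun a => f (S (surjInv hf_surj a)), fun x => hS _ _ (surjInv_eq hf_surj _).symm⟩
  have hs_surj : Surjective s := .of_comp (hs.comp_eq ▸ hf_surj.comp S.surjective)
  let σ : Equiv.Perm α := .ofBijective s (Finite.surjective_iff_bijective.1 hs_surj)
  have hcycle (a : α) : σ.SameCycle (f x₀) a := by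
    obtain ⟨-, hn, n, rfl⟩ :=
      hx₀.inter_open_nonempty _ ((isOpen_discrete {a}).preimage hf) (hf_surj a)
    exact ⟨n, (semiconj_perm_zpow (τ := σ) hs n x₀).symm.trans hn⟩
  obtain ⟨e, he⟩ := exists_equiv_zmod_of_forall_sameCycle hcycle
  refine ⟨e ∘ f, ⟨continuous_of_discreteTopology.comp hf, fun x => ?_⟩, fun x y h => e.injective h⟩
  rw [comp_apply, comp_apply, hs, ← he]
  rfl

theorem boundedSpeedup_of_odometer_conjugate_general {X : Type*} [TopologicalSpace X]
    [CompactSpace X] {T : Equiv.Perm X} (hT : Continuous T.symm)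
    (hodo : ∃ (m : ℕ → ℕ) (A : ℕ → Set X), IsOdometerData T m A) {p : X → ℤ}
    (hp : ∃ M : ℕ, ∀ x, |p x| ≤ M) {S : Equiv.Perm X} (hS : Continuous S)
    (hSp : ∀ x, S x = (T ^ p x) x) {x₀ : X}
    (hx₀ : Dense (range fun n : ℤ => (S ^ n) x₀)) :
    ∃ φ : X ≃ₜ X, ∀ x, φ (S x) = T (φ x) := by
  obtain ⟨m, A, hodo⟩ := hodo
  obtain ⟨M, hM⟩ := hp
  have hm (k : ℕ) : NeZero (m k) := ⟨Nat.ne_zero_of_lt (hodo.lt_height k)⟩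
  have : Nonempty X := ⟨x₀⟩
  obtain ⟨f, hfT, hf⟩ := hodo.exists_isSeparatingTower hT
  have hp_cont : Continuous p := (hfT (2 * M)).continuous_jump hS hSp fun x => by
    linarith [hM x, hodo.lt_height (2 * M)]
  obtain ⟨K, hK⟩ := hf.exists_forall_eq_imp_eq hp_cont
  have hfS (k : ℕ) (x y : X) (h : f (K + k) x = f (K + k) y) :
      f (K + k) (S x) = f (K + k) (S y) := by
    rw [hSp, hSp, (hfT _).map_zpow_apply, (hfT _).map_zpow_apply, h,
      hK x y (hf.eq_of_le (Nat.le_add_right K k) h)]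
  choose g hgS hgf using fun k => exists_isRotationFactor_of_map_fibers (Nat.card_zmod (m (K + k)))
    (hf.continuous _) (hfT _).surjective (hfS k) hx₀
  have hfK := hf.shift K
  exact IsRotationFactor.exists_conjugacy (.pi fun k => hfT (K + k)) (.pi hgS)
    (fun x y h => hfK.eq_of_forall_eq (congrFun h))
    (fun x y h => hfK.eq_of_forall_eq fun k => hgf k x y (congrFun h k))
    (hf.isMinimalHomeo hfT x₀) hx₀

/-- A minimal bounded speedup of an odometer is topologically conjugate to
the odometer itself. -/
theorem boundedSpeedup_of_odometer_conjugate
    {X : Type*} [TopologicalSpace X] [CompactSpace X]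
    [TopologicalSpace.MetrizableSpace X] [TotallyDisconnectedSpace X] [PerfectSpace X]
    [Nonempty X]
    (T : Equiv.Perm X) (hTc : Continuous T) (hTc' : Continuous T.symm)
    (hTmin : IsMinimalHomeo T)
    (hodo : ∃ (m : ℕ → ℕ) (A : ℕ → Set X), IsOdometerData T m A)
    (p : X → ℕ) (hp1 : ∀ x, 1 ≤ p x) (hpbdd : ∃ M : ℕ, ∀ x, p x ≤ M)
    (S : Equiv.Perm X) (hSc : Continuous S) (hSc' : Continuous S.symm)
    (hSp : ∀ x, S x = (T ^ p x) x) (hSmin : IsMinimalHomeo S) :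
    ∃ φ : X ≃ₜ X, ∀ x, φ (S x) = T (φ x) := by
  exact boundedSpeedup_of_odometer_conjugate_general hTc' hodo (p := fun x => p x)
    (by simpa using hpbdd) hSc (by simpa using hSp) (hSmin (Classical.arbitrary X))
end
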